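/- arXiv:1011.4927 — 3 statements merged into one kernel-verified Lean document; each statement's English description precedes it below -/
import Mathlib

section
/- Let ν, d ≥ 1 and let M ⊆ M_ν(ℝ[x₁,…,x_d]) be an archimedean quadratic module (with respect to the involution F ↦ Fᵀ). Set K_M = {(a, v) ∈ ℝ^d × ℝ^ν : vᵀ G(a) v ≥ 0 for every G ∈ M}. Then for every F ∈ M_ν(ℝ[x₁,…,x_d]) with Fᵀ = F the following are equivalent: (i) vᵀ F(a) v ≥ 0 for every pair (a, v) ∈ K_M; (ii) for every real ε > 0, F + ε·I_ν ∈ M. -/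
open MvPolynomial Matrix

/-- A quadratic module in `M_ν(ℝ[x₁,…,x_d])` with respect to the involution `F ↦ Fᵀ`. -/
def IsMatPolyQuadraticModule (ν d : ℕ)
    (M : Set (Matrix (Fin ν) (Fin ν) (MvPolynomial (Fin d) ℝ))) : Prop :=
  (1 : Matrix (Fin ν) (Fin ν) (MvPolynomial (Fin d) ℝ)) ∈ M ∧
  (∀ a ∈ M, ∀ b ∈ M, a + b ∈ M) ∧
  (∀ m ∈ M, ∀ G : Matrix (Fin ν) (Fin ν) (MvPolynomial (Fin d) ℝ), Gᵀ * m * G ∈ M)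

/-- The quadratic module `M` is archimedean. -/
def IsMatPolyArchimedean (ν d : ℕ)
    (M : Set (Matrix (Fin ν) (Fin ν) (MvPolynomial (Fin d) ℝ))) : Prop :=
  ∀ F : Matrix (Fin ν) (Fin ν) (MvPolynomial (Fin d) ℝ), Fᵀ = F →
    ∃ n : ℕ, (n : ℕ) • (1 : Matrix (Fin ν) (Fin ν) (MvPolynomial (Fin d) ℝ)) - F ∈ M

/-!
Let `C` be the cone of all matrices whose symmetrization lies in the quadratic module. It has order
unit `1` and is stable under multiplication by squares of scalars. By a separation argument and
Krein–Milman, `F + ε • 1 ∈ C` for all `ε > 0` as soon as `L F ≥ 0` for every pure state `L` of `C`.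

For a scalar `p`, the sequence `k ↦ L (p ^ (2 * k) • m)` with `m ∈ C` is log-convex and grows at
most geometrically, with ratio independent of `m`; hence the functional `G ↦ L (p ^ 2 • G)` is
dominated by a multiple of `L`. A positive functional dominated by a pure state is a multiple of
it, so `L (p ^ 2 • G)` is proportional to `L G`, and by polarization `L (p • G) = χ p * L G` for a
character `χ`, which for polynomials is evaluation at a point.

All pairs `(χ, v)` then lie in `K_M`, because `M` contains the scalar matrices `(wᵀ G w) I` for
`G ∈ M`. Hence `χ(F)` is positive semidefinite, `χ(F) = Bᵀ B`, and `L F = L (Bᵀ B) ≥ 0`.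
-/

section LogConvex

variable {a : ℕ → ℝ}

theorem one_mul_le_zero_mul_succ_of_logConvex (h0 : ∀ k, 0 ≤ a k)
    (hlc : ∀ k, a (k + 1) ^ 2 ≤ a k * a (k + 2)) (k : ℕ) : a 1 * a k ≤ a 0 * a (k + 1) := by
  induction k with
  | zero => rw [mul_comm]
  | succ k ih =>
    rcases (h0 k).eq_or_lt with hk | hk
    · have hzero : a (k + 1) = 0 := by simpa [← hk, sq_nonpos_iff] using hlc k
      simpa [hzero] using mul_nonneg (h0 0) (h0 (k + 2))
    · refine le_of_mul_le_mul_left ?_ hk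
      calc a k * (a 1 * a (k + 1)) = a 1 * a k * a (k + 1) := by ring
        _ ≤ a 0 * a (k + 1) * a (k + 1) := mul_le_mul_of_nonneg_right ih (h0 _)
        _ = a 0 * a (k + 1) ^ 2 := by ring
        _ ≤ a 0 * (a k * a (k + 2)) := mul_le_mul_of_nonneg_left (hlc k) (h0 0)
        _ = a k * (a 0 * a (k + 2)) := by ring

theorem le_mul_of_logConvex_of_le_pow {c N : ℝ} (hN : 0 ≤ N) (h0 : ∀ k, 0 ≤ a k)
    (hlc : ∀ k, a (k + 1) ^ 2 ≤ a k * a (k + 2)) (hgrow : ∀ k, a k ≤ c * N ^ k) :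
    a 1 ≤ N * a 0 := by
  by_contra! hlt
  have ha1 : 0 < a 1 := (mul_nonneg hN (h0 0)).trans_lt hlt
  have ha0 : 0 < a 0 := by
    refine (h0 0).lt_of_ne fun h => ha1.ne' ?_
    simpa [← h, sq_nonpos_iff] using hlc 0
  have hc : 0 < c := ha0.trans_le (by simpa using hgrow 0)
  have hr : 0 < a 1 / a 0 := div_pos ha1 ha0
  have hgeom (k : ℕ) : (a 1 / a 0) ^ k * a 0 ≤ a k := geom_le hr.le k fun j _ => by
    rw [div_mul_eq_mul_div, div_le_iff₀' ha0]
    exact one_mul_le_zero_mul_succ_of_logConvex h0 hlc j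
  have hratio : N / (a 1 / a 0) < 1 := by rwa [div_lt_one hr, lt_div_iff₀ ha0]
  obtain ⟨k, hk⟩ := exists_pow_lt_of_lt_one (div_pos ha0 hc) hratio
  rw [div_pow, div_lt_div_iff₀ (pow_pos hr k) hc] at hk
  linarith [hgeom k, hgrow k]

end LogConvex

/-- `e` is an order unit for the cone `C`: every vector is dominated by a multiple of `e`. -/
def IsOrderUnit {E : Type*} [AddCommGroup E] [Module ℝ E] (C : PointedCone ℝ E) (e : E) : Prop :=
  ∀ x : E, ∃ n : ℕ, n • e - x ∈ C

/-- The states of a cone `C` with order unit `e`, as a set of functionals in the algebraic dual.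
Its extreme points are the pure states. -/
def stateSpace {E : Type*} [AddCommGroup E] [Module ℝ E] (C : PointedCone ℝ E) (e : E) :
    Set (Module.Dual ℝ E) :=
  {L | (∀ m ∈ C, 0 ≤ L m) ∧ L e = 1}

section States

variable {E : Type*} [AddCommGroup E] [Module ℝ E] {C D : PointedCone ℝ E} {e x : E}

theorem convex_stateSpace : Convex ℝ (stateSpace C e) := by
  rintro L ⟨hL, hLe⟩ L' ⟨hL', hLe'⟩ s t hs ht hst
  refine ⟨fun m hm => ?_, by simp [hLe, hLe', hst]⟩
  simpa using add_nonneg (mul_nonneg hs (hL m hm)) (mul_nonneg ht (hL' m hm))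

namespace IsOrderUnit

theorem mem (he : IsOrderUnit C e) : e ∈ C := by
  obtain ⟨n, hn⟩ := he (-e)
  have hpos : (0 : ℝ) < n + 1 := by positivity
  refine (C.smul_mem_iff hpos).1 ?_
  convert hn using 1
  module

theorem mono (he : IsOrderUnit C e) (hCD : C ≤ D) : IsOrderUnit D e := fun x =>
  (he x).imp fun _ hn => hCD hn

theorem mem_of_neg_mem (he : IsOrderUnit C e) (hneg : -e ∈ C) : x ∈ C := by
  obtain ⟨n, hn⟩ := he (-x)
  convert C.add_mem hn (C.nsmul_mem hneg n) using 1
  module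

theorem nonempty_stateSpace (he : IsOrderUnit C e) (hneg : -e ∉ C) :
    (stateSpace C e).Nonempty := by
  have he0 : e ≠ 0 := by
    rintro rfl
    simp at hneg
  let f : E →ₗ.[ℝ] ℝ := LinearPMap.mkSpanSingleton e (1 : ℝ) he0
  have hf (t : ℝ) (ht : t • e ∈ f.domain) : f ⟨t • e, ht⟩ = t :=
    (LinearPMap.mkSpanSingleton'_apply (σ := RingHom.id ℝ) e (1 : ℝ) _ t ht).trans (mul_one t)
  have hfe (t : ℝ) : t • e ∈ f.domain :=
    Submodule.smul_mem _ t (Submodule.mem_span_singleton_self e)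
  have hnonneg (y : f.domain) (hy : (y : E) ∈ C) : 0 ≤ f y := by
    obtain ⟨y, hydom⟩ := y
    obtain ⟨t, rfl⟩ := Submodule.mem_span_singleton.1 hydom
    rw [hf]
    by_contra! ht
    refine hneg ((C.smul_mem_iff (neg_pos.2 ht)).1 ?_)
    simpa using hy
  have hdense (y : E) : ∃ z : f.domain, (z : E) + y ∈ C := by
    obtain ⟨n, hn⟩ := he (-y)
    exact ⟨⟨(n : ℝ) • e, hfe n⟩, by simpa [Nat.cast_smul_eq_nsmul] using hn⟩
  obtain ⟨L, hLf, hLC⟩ := riesz_extension C f hnonneg hdense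
  exact ⟨L, hLC, by simpa using (hLf ⟨(1 : ℝ) • e, hfe 1⟩).trans (hf 1 _)⟩

theorem exists_mem_stateSpace_apply_nonpos (he : IsOrderUnit C e) (hx : x ∉ C) :
    ∃ L ∈ stateSpace C e, L x ≤ 0 := by
  let D : PointedCone ℝ E := C ⊔ PointedCone.hull ℝ {-x}
  have hneg : -e ∉ D := by
    intro h
    obtain ⟨m, hm, y, hy, hsum⟩ := Submodule.mem_sup.1 h
    obtain ⟨⟨c, hc⟩, rfl⟩ := Submodule.mem_span_singleton.1 hy
    replace hsum : m + c • -x = -e := hsum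
    rcases hc.eq_or_lt with rfl | hc
    · rw [zero_smul, add_zero] at hsum
      exact hx (he.mem_of_neg_mem (hsum ▸ hm))
    · have hcx : c • x = m + e := by
        rw [← sub_eq_zero, ← neg_eq_zero, ← sub_eq_zero.2 hsum]
        module
      exact hx ((C.smul_mem_iff hc).1 (hcx ▸ C.add_mem hm he.mem))
  obtain ⟨L, hLD, hLe⟩ := (he.mono le_sup_left : IsOrderUnit D e).nonempty_stateSpace hneg
  have hLx := hLD (-x) (Submodule.mem_sup_right (Submodule.mem_span_singleton_self (-x)))
  exact ⟨L, ⟨fun m hm => hLD m (Submodule.mem_sup_left hm), hLe⟩, by simpa using hLx⟩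

theorem isCompact_image_ltoFun_stateSpace (he : IsOrderUnit C e) :
    IsCompact (LinearMap.ltoFun ℝ E ℝ ℝ '' stateSpace C e) := by
  choose b hb using he
  refine (isCompact_univ_pi fun x : E =>
    isCompact_Icc (a := -(b (-x) : ℝ)) (b := (b x : ℝ))).of_isClosed_subset ?_ ?_
  · have hlinear : IsClosed (Set.range ((↑) : (E →ₗ[ℝ] ℝ) → E → ℝ)) :=
      LinearMap.isClosed_range_coe E ℝ (RingHom.id ℝ)
    have hnonneg : IsClosed {φ : E → ℝ | ∀ m ∈ C, 0 ≤ φ m} := by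
      simp only [Set.ofPred_forall]
      exact isClosed_iInter fun m => isClosed_iInter fun _ =>
        isClosed_le continuous_const (continuous_apply m)
    have hunit : IsClosed {φ : E → ℝ | φ e = 1} :=
      isClosed_eq (continuous_apply e) continuous_const
    convert hlinear.inter (hnonneg.inter hunit) using 1
    ext φ
    constructor
    · rintro ⟨L, hL, rfl⟩
      exact ⟨⟨L, rfl⟩, hL⟩
    · rintro ⟨⟨L, rfl⟩, hL⟩
      exact ⟨L, hL, rfl⟩
  · rintro _ ⟨L, ⟨hL, hLe⟩, rfl⟩ x -
    have hupper := hL _ (hb x)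
    have hlower := hL _ (hb (-x))
    simp only [map_sub, map_nsmul, map_neg, hLe, nsmul_eq_mul, mul_one] at hupper hlower
    exact ⟨show -(b (-x) : ℝ) ≤ L x by linarith, show L x ≤ b x by linarith⟩

theorem apply_nonneg_of_forall_extremePoints (he : IsOrderUnit C e)
    (hx : ∀ L ∈ (stateSpace C e).extremePoints ℝ, 0 ≤ L x) {L : Module.Dual ℝ E}
    (hL : L ∈ stateSpace C e) : 0 ≤ L x := by
  let S : Set (E → ℝ) := LinearMap.ltoFun ℝ E ℝ ℝ '' stateSpace C e
  have hext : ∀ φ ∈ S.extremePoints ℝ, 0 ≤ φ x := by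
    rintro _ ⟨⟨L, hL, rfl⟩, hext⟩
    refine hx L ⟨hL, fun L₁ hL₁ L₂ hL₂ hseg => DFunLike.coe_injective ?_⟩
    refine hext ⟨L₁, hL₁, rfl⟩ ⟨L₂, hL₂, rfl⟩ ?_
    obtain ⟨s, t, hs, ht, hst, hcomb⟩ := hseg
    exact ⟨s, t, hs, ht, hst, congrArg (LinearMap.ltoFun ℝ E ℝ ℝ) hcomb⟩
  have hKM : closure (convexHull ℝ (S.extremePoints ℝ)) = S :=
    closure_convexHull_extremePoints he.isCompact_image_ltoFun_stateSpace
      (convex_stateSpace.linear_image _)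
  have hSH : S ⊆ {φ | 0 ≤ φ x} := by
    rw [← hKM]
    exact closure_minimal
      (convexHull_min hext (convex_halfSpace_ge (LinearMap.proj x).isLinear 0))
      (isClosed_le continuous_const (continuous_apply x))
  exact hSH ⟨L, hL, rfl⟩

theorem add_smul_mem_of_forall_extremePoints (he : IsOrderUnit C e)
    (hx : ∀ L ∈ (stateSpace C e).extremePoints ℝ, 0 ≤ L x) {ε : ℝ} (hε : 0 < ε) :
    x + ε • e ∈ C := by
  by_contra hmem
  obtain ⟨L, hL, hLx⟩ := he.exists_mem_stateSpace_apply_nonpos hmem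
  have hnonneg : 0 ≤ L x := he.apply_nonneg_of_forall_extremePoints hx hL
  rw [map_add, map_smul, hL.2, smul_eq_mul] at hLx
  linarith

theorem eq_zero_of_apply_eq_zero (he : IsOrderUnit C e) {f : Module.Dual ℝ E}
    (hf : ∀ m ∈ C, 0 ≤ f m) (hfe : f e = 0) : f = 0 := by
  have hnonpos (y : E) : f y ≤ 0 := by
    obtain ⟨n, hn⟩ := he y
    simpa [hfe] using hf _ hn
  ext y
  exact le_antisymm (hnonpos y) (by simpa using hnonpos (-y))

theorem eq_smul_of_mem_extremePoints_of_le (he : IsOrderUnit C e) {L f : Module.Dual ℝ E}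
    (hL : L ∈ (stateSpace C e).extremePoints ℝ) (hf : ∀ m ∈ C, 0 ≤ f m) {N : ℝ}
    (hfL : ∀ m ∈ C, f m ≤ N * L m) : f = f e • L := by
  obtain ⟨⟨hLC, hLe⟩, hext⟩ := hL
  rcases (hf e he.mem).eq_or_lt with hfe | hfe
  · rw [← hfe, zero_smul, he.eq_zero_of_apply_eq_zero hf hfe.symm]
  -- `L` is a convex combination of the normalizations of `f` and `(N + 1) • L - f`.
  have hfN : f e ≤ N := by simpa [hLe] using hfL e he.mem
  have hgap : 0 < N + 1 - f e := by linarith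
  have hN : 0 < N + 1 := by linarith
  have hf_state : (f e)⁻¹ • f ∈ stateSpace C e :=
    ⟨fun m hm => mul_nonneg (inv_nonneg.2 hfe.le) (hf m hm), inv_mul_cancel₀ hfe.ne'⟩
  have hg_state : (N + 1 - f e)⁻¹ • ((N + 1) • L - f) ∈ stateSpace C e := by
    refine ⟨fun m hm => mul_nonneg (inv_nonneg.2 hgap.le) ?_, ?_⟩
    · have := hLC m hm
      have := hfL m hm
      change 0 ≤ (N + 1) * L m - f m
      linarith
    · simp [hLe, hgap.ne']
  have hseg : L ∈ openSegment ℝ ((f e)⁻¹ • f) ((N + 1 - f e)⁻¹ • ((N + 1) • L - f)) := by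
    refine ⟨f e / (N + 1), (N + 1 - f e) / (N + 1), by positivity, by positivity,
      by field_simp; ring, ?_⟩
    match_scalars <;> field_simp
    ring
  rw [← hext hf_state hg_state hseg, smul_inv_smul₀ hfe.ne']

end IsOrderUnit

end States

section PureStateCharacter

variable {A E : Type*} [CommRing A] [Algebra ℝ A] [AddCommGroup E] [Module ℝ E] [Module A E]
  [IsScalarTower ℝ A E] {C : PointedCone ℝ E} {e : E} {L : Module.Dual ℝ E}

theorem apply_sq_smul_logConvex (hsq : ∀ p : A, ∀ m ∈ C, p ^ 2 • m ∈ C)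
    (hL : ∀ m ∈ C, 0 ≤ L m) (p : A) {m : E} (hm : m ∈ C) (k : ℕ) :
    L ((p ^ (k + 1)) ^ 2 • m) ^ 2 ≤ L ((p ^ k) ^ 2 • m) * L ((p ^ (k + 2)) ^ 2 • m) := by
  have hquad (t : ℝ) : 0 ≤ L ((p ^ (k + 2)) ^ 2 • m) * (t * t)
      + 2 * L ((p ^ (k + 1)) ^ 2 • m) * t + L ((p ^ k) ^ 2 • m) := by
    have hexpand : (p ^ k * (1 + t • p ^ 2)) ^ 2 =
        (p ^ k) ^ 2 + (2 * t) • (p ^ (k + 1)) ^ 2 + (t * t) • (p ^ (k + 2)) ^ 2 := by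
      simp only [Algebra.smul_def, map_mul, map_ofNat]
      ring
    have hnonneg := hL _ (hsq (p ^ k * (1 + t • p ^ 2)) _ hm)
    simp only [hexpand, add_smul, smul_assoc, map_add, map_smul, smul_eq_mul] at hnonneg
    linarith
  have hdiscrim := discrim_le_zero hquad
  rw [discrim] at hdiscrim
  linarith

theorem apply_pow_sq_smul_unit_le (hsq : ∀ p : A, ∀ m ∈ C, p ^ 2 • m ∈ C)
    (hL : ∀ m ∈ C, 0 ≤ L m) {p : A} {N : ℝ} (hN : 0 ≤ N) (hp : N • e - p ^ 2 • e ∈ C) (k : ℕ) :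
    L ((p ^ k) ^ 2 • e) ≤ L e * N ^ k := by
  induction k with
  | zero => simp
  | succ k ih =>
    have hstep := hL _ (hsq (p ^ k) _ hp)
    rw [smul_sub, smul_comm, smul_smul, ← mul_pow, ← pow_succ, map_sub, map_smul, smul_eq_mul,
      sub_nonneg] at hstep
    calc L ((p ^ (k + 1)) ^ 2 • e) ≤ N * L ((p ^ k) ^ 2 • e) := hstep
      _ ≤ N * (L e * N ^ k) := mul_le_mul_of_nonneg_left ih hN
      _ = L e * N ^ (k + 1) := by ring

namespace IsOrderUnit

theorem apply_sq_smul_le (he : IsOrderUnit C e) (hsq : ∀ p : A, ∀ m ∈ C, p ^ 2 • m ∈ C)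
    (hL : ∀ m ∈ C, 0 ≤ L m) {p : A} {N : ℝ} (hN : 0 ≤ N) (hp : N • e - p ^ 2 • e ∈ C) {m : E}
    (hm : m ∈ C) : L (p ^ 2 • m) ≤ N * L m := by
  obtain ⟨n, hn⟩ := he m
  have hgrow (k : ℕ) : L ((p ^ k) ^ 2 • m) ≤ n * L e * N ^ k := by
    have hdom := hL _ (hsq (p ^ k) _ hn)
    rw [smul_sub, smul_comm, map_sub, map_nsmul, nsmul_eq_mul, sub_nonneg] at hdom
    calc L ((p ^ k) ^ 2 • m) ≤ n * L ((p ^ k) ^ 2 • e) := hdom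
      _ ≤ n * (L e * N ^ k) :=
        mul_le_mul_of_nonneg_left (apply_pow_sq_smul_unit_le hsq hL hN hp k) n.cast_nonneg
      _ = n * L e * N ^ k := (mul_assoc _ _ _).symm
  simpa using le_mul_of_logConvex_of_le_pow (a := fun k => L ((p ^ k) ^ 2 • m)) hN
    (fun k => hL _ (hsq _ _ hm)) (apply_sq_smul_logConvex hsq hL p hm) hgrow

theorem apply_sq_smul_of_mem_extremePoints (he : IsOrderUnit C e)
    (hsq : ∀ p : A, ∀ m ∈ C, p ^ 2 • m ∈ C) (hL : L ∈ (stateSpace C e).extremePoints ℝ)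
    (p : A) (x : E) : L (p ^ 2 • x) = L (p ^ 2 • e) * L x := by
  obtain ⟨n, hn⟩ := he (p ^ 2 • e)
  rw [← Nat.cast_smul_eq_nsmul ℝ] at hn
  have heq := he.eq_smul_of_mem_extremePoints_of_le (f := L ∘ₗ Algebra.lsmul ℝ ℝ E (p ^ 2)) hL
    (fun m hm => hL.1.1 _ (hsq p m hm))
    (fun m hm => he.apply_sq_smul_le hsq hL.1.1 n.cast_nonneg hn hm)
  exact LinearMap.congr_fun heq x

theorem apply_smul_of_mem_extremePoints (he : IsOrderUnit C e)
    (hsq : ∀ p : A, ∀ m ∈ C, p ^ 2 • m ∈ C) (hL : L ∈ (stateSpace C e).extremePoints ℝ)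
    (p : A) (x : E) : L (p • x) = L (p • e) * L x := by
  have hpolar (y : E) : 4 * L (p • y) = L ((p + 1) ^ 2 • y) - L ((p - 1) ^ 2 • y) := by
    have hp : (p + 1) ^ 2 - (p - 1) ^ 2 = (4 : ℝ) • p := by
      rw [Algebra.smul_def, map_ofNat]
      ring
    rw [← map_sub, ← sub_smul, hp, smul_assoc, L.map_smul, smul_eq_mul]
  have hplus := he.apply_sq_smul_of_mem_extremePoints hsq hL (p + 1) x
  have hminus := he.apply_sq_smul_of_mem_extremePoints hsq hL (p - 1) x
  linear_combination (hpolar x + hplus - hminus - L x * hpolar e) / 4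

theorem exists_algHom_of_mem_extremePoints (he : IsOrderUnit C e)
    (hsq : ∀ p : A, ∀ m ∈ C, p ^ 2 • m ∈ C) (hL : L ∈ (stateSpace C e).extremePoints ℝ) :
    ∃ χ : A →ₐ[ℝ] ℝ, ∀ (p : A) (x : E), L (p • x) = χ p * L x := by
  have hmul := he.apply_smul_of_mem_extremePoints hsq hL
  refine ⟨AlgHom.ofLinearMap (L ∘ₗ (LinearMap.toSpanSingleton A E e).restrictScalars ℝ) ?_ ?_,
    hmul⟩
  · simpa using hL.1.2
  · intro p q
    simpa [mul_smul] using hmul p (q • e)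

end IsOrderUnit

end PureStateCharacter

/-- Quadratic modules of square matrices over a commutative ring, with the transpose as
involution. -/
structure IsMatrixQuadraticModule {n A : Type*} [Fintype n] [DecidableEq n] [CommRing A]
    (M : Set (Matrix n n A)) : Prop where
  one_mem : 1 ∈ M
  add_mem : ∀ {F G : Matrix n n A}, F ∈ M → G ∈ M → F + G ∈ M
  transpose_mul_mul_mem : ∀ {F : Matrix n n A}, F ∈ M → ∀ G : Matrix n n A, Gᵀ * F * G ∈ M

/-- The archimedean property of a quadratic module of matrices: every symmetric matrix is bounded
above by a multiple of the identity. -/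
def IsMatrixArchimedean {n A : Type*} [DecidableEq n] [CommRing A] (M : Set (Matrix n n A)) :
    Prop :=
  ∀ F : Matrix n n A, Fᵀ = F → ∃ k : ℕ, k • (1 : Matrix n n A) - F ∈ M

/-- The set `K_M`, where points are encoded as real characters `χ` of the ring of coefficients:
the pairs `(χ, v)` such that `vᵀ χ(G) v ≥ 0` for all `G ∈ M`. -/
def nonnegLocus {n A : Type*} [Fintype n] [CommRing A] [Algebra ℝ A] (M : Set (Matrix n n A)) :
    Set ((A →ₐ[ℝ] ℝ) × (n → ℝ)) :=
  {z | ∀ G ∈ M, 0 ≤ z.2 ⬝ᵥ G.map z.1 *ᵥ z.2}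

section MatrixFunctional

variable {m n A : Type*} [CommRing A] [Algebra ℝ A] {χ : A →ₐ[ℝ] ℝ}

theorem apply_map_algebraMap_map [Finite m] [Finite n] {L : Module.Dual ℝ (Matrix m n A)}
    (hχ : ∀ (p : A) (G : Matrix m n A), L (p • G) = χ p * L G) (G : Matrix m n A) :
    L ((G.map χ).map (algebraMap ℝ A)) = L G := by
  classical
  have := Fintype.ofFinite m
  have := Fintype.ofFinite n
  have hexpand (H : Matrix m n A) : L H = ∑ i, ∑ j, χ (H i j) * L (single i j 1) := by
    conv_lhs => rw [matrix_eq_sum_single H]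
    simp only [map_sum, ← hχ, smul_single, smul_eq_mul, mul_one]
  rw [hexpand G, hexpand]
  simp

theorem exists_map_eq_transpose_mul_self [Fintype n] {F : Matrix n n A} (hF : Fᵀ = F)
    (hnonneg : ∀ v : n → ℝ, 0 ≤ v ⬝ᵥ F.map χ *ᵥ v) : ∃ B : Matrix n n ℝ, F.map χ = Bᵀ * B := by
  classical
  have hpsd : (F.map χ).PosSemidef := by
    refine .of_dotProduct_mulVec_nonneg ?_ (by simpa using hnonneg)
    rw [IsHermitian, conjTranspose_eq_transpose_of_trivial, ← transpose_map, hF]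
  open scoped MatrixOrder in
  obtain ⟨B, hB⟩ := CStarAlgebra.nonneg_iff_eq_star_mul_self.1 hpsd.nonneg
  exact ⟨B, by rw [hB, star_eq_conjTranspose, conjTranspose_eq_transpose_of_trivial]⟩

end MatrixFunctional

namespace IsMatrixQuadraticModule

variable {n A : Type*} [Fintype n] [DecidableEq n] [CommRing A] {M : Set (Matrix n n A)}

theorem zero_mem (hM : IsMatrixQuadraticModule M) : 0 ∈ M := by
  simpa using hM.transpose_mul_mul_mem hM.one_mem 0

theorem sum_mem (hM : IsMatrixQuadraticModule M) {ι : Type*} {s : Finset ι}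
    {G : ι → Matrix n n A} (hG : ∀ i ∈ s, G i ∈ M) : ∑ i ∈ s, G i ∈ M :=
  Finset.sum_induction G (· ∈ M) (fun _ _ => hM.add_mem) hM.zero_mem hG

theorem sq_smul_mem (hM : IsMatrixQuadraticModule M) {G : Matrix n n A} (hG : G ∈ M) (p : A) :
    p ^ 2 • G ∈ M := by
  simpa [smul_smul, sq] using hM.transpose_mul_mul_mem hG (p • 1)

-- With `eᵢ` the standard basis, `(wᵀ G w) I = ∑ᵢ (w eᵢᵀ)ᵀ G (w eᵢᵀ)`.
theorem dotProduct_mulVec_smul_one_mem (hM : IsMatrixQuadraticModule M) {G : Matrix n n A}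
    (hG : G ∈ M) (w : n → A) : (w ⬝ᵥ G *ᵥ w) • (1 : Matrix n n A) ∈ M := by
  have hterm (i : n) : (vecMulVec w (Pi.single i 1))ᵀ * G * vecMulVec w (Pi.single i 1) =
      (w ⬝ᵥ G *ᵥ w) • single i i (1 : A) := by
    rw [transpose_vecMulVec, mul_assoc, mul_vecMulVec, vecMulVec_mul_vecMulVec,
      single_eq_single_vecMulVec_single, vecMulVec_smul]
  rw [← sum_single_one, Finset.smul_sum]
  exact hM.sum_mem fun i _ => hterm i ▸ hM.transpose_mul_mul_mem hG _

variable [Algebra ℝ A]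

theorem smul_mem (hM : IsMatrixQuadraticModule M) {G : Matrix n n A} (hG : G ∈ M) {c : ℝ}
    (hc : 0 ≤ c) : c • G ∈ M := by
  simpa [← map_pow, Real.sq_sqrt hc] using hM.sq_smul_mem hG (algebraMap ℝ A √c)

/-- The cone of all matrices whose symmetrization lies in the quadratic module `M`. It has the same
symmetric elements as `M`, but its order unit dominates all matrices and not only the symmetric
ones. -/
def symmCone (hM : IsMatrixQuadraticModule M) : PointedCone ℝ (Matrix n n A) where
  carrier := {G | G + Gᵀ ∈ M}
  zero_mem' := by simpa using hM.zero_mem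
  add_mem' {F G} hF hG := by
    change F + G + (F + G)ᵀ ∈ M
    rw [transpose_add, add_add_add_comm]
    exact hM.add_mem hF hG
  smul_mem' c G hG := by
    change (c : ℝ) • G + ((c : ℝ) • G)ᵀ ∈ M
    rw [transpose_smul, ← smul_add]
    exact hM.smul_mem hG c.2

theorem mem_symmCone {hM : IsMatrixQuadraticModule M} {G : Matrix n n A} :
    G ∈ hM.symmCone ↔ G + Gᵀ ∈ M :=
  Iff.rfl

theorem mem_symmCone_of_mem (hM : IsMatrixQuadraticModule M) {G : Matrix n n A} (hG : Gᵀ = G)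
    (hGM : G ∈ M) : G ∈ hM.symmCone := by
  rw [mem_symmCone, hG]
  exact hM.add_mem hGM hGM

theorem mem_of_mem_symmCone (hM : IsMatrixQuadraticModule M) {G : Matrix n n A} (hG : Gᵀ = G)
    (hGC : G ∈ hM.symmCone) : G ∈ M := by
  rw [mem_symmCone, hG, ← two_smul ℝ] at hGC
  simpa using hM.smul_mem hGC (c := 2⁻¹) (by norm_num)

theorem transpose_mul_mul_mem_symmCone (hM : IsMatrixQuadraticModule M) {G : Matrix n n A}
    (hG : G ∈ hM.symmCone) (H : Matrix n n A) : Hᵀ * G * H ∈ hM.symmCone := by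
  rw [mem_symmCone]
  convert hM.transpose_mul_mul_mem hG H using 1
  simp only [transpose_mul, transpose_transpose, mul_add, add_mul, mul_assoc]

theorem sq_smul_mem_symmCone (hM : IsMatrixQuadraticModule M) (p : A) (G : Matrix n n A)
    (hG : G ∈ hM.symmCone) : p ^ 2 • G ∈ hM.symmCone := by
  rw [mem_symmCone, transpose_smul, ← smul_add]
  exact hM.sq_smul_mem hG p

theorem isOrderUnit_one (hM : IsMatrixQuadraticModule M) (hArch : IsMatrixArchimedean M) :
    IsOrderUnit hM.symmCone 1 := by
  intro G
  obtain ⟨k, hk⟩ := hArch ((2⁻¹ : ℝ) • (G + Gᵀ)) (by simp [add_comm])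
  refine ⟨k, mem_symmCone.2 ?_⟩
  convert hM.add_mem hk hk using 1
  simp only [transpose_sub, transpose_smul, transpose_one]
  module

variable {L : Module.Dual ℝ (Matrix n n A)} {χ : A →ₐ[ℝ] ℝ}

theorem mk_mem_nonnegLocus (hM : IsMatrixQuadraticModule M) (hL : L ∈ stateSpace hM.symmCone 1)
    (hχ : ∀ (p : A) (G : Matrix n n A), L (p • G) = χ p * L G) (v : n → ℝ) :
    (χ, v) ∈ nonnegLocus M := by
  intro G hG
  let w : n → A := algebraMap ℝ A ∘ v
  have hmem : (w ⬝ᵥ G *ᵥ w) • (1 : Matrix n n A) ∈ hM.symmCone :=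
    hM.mem_symmCone_of_mem (by simp) (hM.dotProduct_mulVec_smul_one_mem hG w)
  have hnonneg := hL.1 _ hmem
  rw [hχ, hL.2, mul_one] at hnonneg
  simpa [w, dotProduct, mulVec] using hnonneg

theorem apply_nonneg_of_map_eq_transpose_mul_self (hM : IsMatrixQuadraticModule M)
    (hL : ∀ G ∈ hM.symmCone, 0 ≤ L G)
    (hχ : ∀ (p : A) (G : Matrix n n A), L (p • G) = χ p * L G) {F : Matrix n n A}
    {B : Matrix n n ℝ} (hB : F.map χ = Bᵀ * B) : 0 ≤ L F := by
  have hsquare : (F.map χ).map (algebraMap ℝ A) =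
      (B.map (algebraMap ℝ A))ᵀ * 1 * B.map (algebraMap ℝ A) := by
    rw [hB, Matrix.map_mul, transpose_map, mul_one]
  rw [← apply_map_algebraMap_map hχ F, hsquare]
  exact hL _ (hM.transpose_mul_mul_mem_symmCone
    (hM.mem_symmCone_of_mem transpose_one hM.one_mem) _)

theorem add_smul_one_mem (hM : IsMatrixQuadraticModule M) (hArch : IsMatrixArchimedean M)
    {F : Matrix n n A} (hF : Fᵀ = F) (hnonneg : ∀ z ∈ nonnegLocus M, 0 ≤ z.2 ⬝ᵥ F.map z.1 *ᵥ z.2)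
    {ε : ℝ} (hε : 0 < ε) : F + ε • (1 : Matrix n n A) ∈ M := by
  refine hM.mem_of_mem_symmCone (by simp [hF]) ?_
  have hunit := hM.isOrderUnit_one hArch
  refine hunit.add_smul_mem_of_forall_extremePoints (fun L hL => ?_) hε
  obtain ⟨χ, hχ⟩ := hunit.exists_algHom_of_mem_extremePoints hM.sq_smul_mem_symmCone hL
  obtain ⟨B, hB⟩ := exists_map_eq_transpose_mul_self hF fun v =>
    hnonneg (χ, v) (hM.mk_mem_nonnegLocus hL.1 hχ v)
  exact hM.apply_nonneg_of_map_eq_transpose_mul_self hL.1.1 hχ hB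

end IsMatrixQuadraticModule

theorem dotProduct_mulVec_nonneg_of_forall_add_smul_one_mem {n A : Type*} [Fintype n]
    [DecidableEq n] [CommRing A] [Algebra ℝ A] {M : Set (Matrix n n A)} {F : Matrix n n A}
    (hF : ∀ ε : ℝ, 0 < ε → F + ε • (1 : Matrix n n A) ∈ M) {z : (A →ₐ[ℝ] ℝ) × (n → ℝ)}
    (hz : z ∈ nonnegLocus M) : 0 ≤ z.2 ⬝ᵥ F.map z.1 *ᵥ z.2 := by
  obtain ⟨χ, v⟩ := z
  have hperturb (ε : ℝ) (hε : 0 < ε) : 0 ≤ v ⬝ᵥ F.map χ *ᵥ v + ε * (v ⬝ᵥ v) := by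
    have hmap : (F + ε • (1 : Matrix n n A)).map χ = F.map χ + ε • (1 : Matrix n n ℝ) := by
      ext i j
      simp [one_apply, apply_ite χ]
    simpa [hmap, add_mulVec, smul_mulVec] using hz _ (hF ε hε)
  have hlim : Filter.Tendsto (fun ε => v ⬝ᵥ F.map χ *ᵥ v + ε * (v ⬝ᵥ v))
      (nhdsWithin 0 (Set.Ioi 0)) (nhds (v ⬝ᵥ F.map χ *ᵥ v)) := by
    refine Filter.Tendsto.mono_left (Continuous.tendsto' (by fun_prop) 0 _ (by simp)) ?_
    exact nhdsWithin_le_nhds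
  exact ge_of_tendsto hlim (eventually_mem_nhdsWithin.mono hperturb)

theorem statement1_general {n A : Type*} [Fintype n] [DecidableEq n] [CommRing A] [Algebra ℝ A]
    {M : Set (Matrix n n A)} (hM : IsMatrixQuadraticModule M) (hArch : IsMatrixArchimedean M)
    {F : Matrix n n A} (hF : Fᵀ = F) :
    (∀ z ∈ nonnegLocus M, 0 ≤ z.2 ⬝ᵥ F.map z.1 *ᵥ z.2) ↔
      ∀ ε : ℝ, 0 < ε → F + ε • (1 : Matrix n n A) ∈ M :=
  ⟨fun h _ hε => hM.add_smul_one_mem hArch hF h hε,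
    fun h _ hz => dotProduct_mulVec_nonneg_of_forall_add_smul_one_mem h hz⟩

theorem forall_nonnegLocus_mvPolynomial_iff {n σ : Type*} [Fintype n]
    {M : Set (Matrix n n (MvPolynomial σ ℝ))} {F : Matrix n n (MvPolynomial σ ℝ)} :
    (∀ z ∈ nonnegLocus M, 0 ≤ z.2 ⬝ᵥ F.map z.1 *ᵥ z.2) ↔
      ∀ (a : σ → ℝ) (v : n → ℝ), (∀ G ∈ M, 0 ≤ v ⬝ᵥ G.map (eval a) *ᵥ v) →
        0 ≤ v ⬝ᵥ F.map (eval a) *ᵥ v := by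
  refine ⟨fun h a v hv => h (aeval a, v) hv, fun h ⟨χ, v⟩ hv => ?_⟩
  have hχ : χ = aeval (χ ∘ X) := aeval_unique χ
  rw [hχ] at hv ⊢
  exact h (χ ∘ X) v hv

/-- For an archimedean quadratic module `M` in `M_ν(ℝ[x₁,…,x_d])` and a
symmetric matrix polynomial `F`: `vᵀ F(a) v ≥ 0` for all `(a,v) ∈ K_M` iff
`F + ε I_ν ∈ M` for every `ε > 0`. -/
theorem statement1 (ν d : ℕ) (hν : 1 ≤ ν) (hd : 1 ≤ d)
    (M : Set (Matrix (Fin ν) (Fin ν) (MvPolynomial (Fin d) ℝ)))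
    (hQM : IsMatPolyQuadraticModule ν d M)
    (hArch : IsMatPolyArchimedean ν d M)
    (F : Matrix (Fin ν) (Fin ν) (MvPolynomial (Fin d) ℝ))
    (hF : Fᵀ = F) :
    (∀ (a : Fin d → ℝ) (v : Fin ν → ℝ),
        (∀ G ∈ M, 0 ≤ v ⬝ᵥ (G.map (MvPolynomial.eval a)).mulVec v) →
        0 ≤ v ⬝ᵥ (F.map (MvPolynomial.eval a)).mulVec v) ↔
    (∀ ε : ℝ, 0 < ε →
        F + ε • (1 : Matrix (Fin ν) (Fin ν) (MvPolynomial (Fin d) ℝ)) ∈ M) :=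
  forall_nonnegLocus_mvPolynomial_iff.symm.trans
    (statement1_general ⟨hQM.1, fun ha hb => hQM.2.1 _ ha _ hb, fun hm => hQM.2.2 _ hm⟩ hArch hF)
end

section
/- Let d ≥ 1 and let f be an element of the free unital associative ℝ-algebra ℝ⟨x₁,…,x_d⟩ on d generators with star f = f, where star is the involution fixing each generator and reversing products. Then the following are equivalent: (i) for every n ≥ 1 and every tuple X = (X₁,…,X_d) of symmetric matrices in M_n(ℝ), the matrix f(X) ∈ M_n(ℝ) is positive semidefinite; (ii) there exist finitely many g₁,…,g_m ∈ ℝ⟨x₁,…,x_d⟩ such that f = Σ_{i=1}^m (star gᵢ)·gᵢ. -/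
open Matrix

/-!
When `f` is not a sum of hermitian squares, a truncated GNS construction produces the matrices at
which it fails to be positive semidefinite.

Let `W` be a finite suffix-closed set of words containing the empty word and the support of `f`,
and let `V` be its span. If `w` is a longest word occurring in `g₁, …, gₘ`, the coefficient of
`star w * w` in `∑ star gᵢ * gᵢ` is the sum of the squares of the coefficients of `w`, so a sum of
hermitian squares vanishes only if every summand does. Thus `-f` and the elements `star g * g`, for
nonzero `g` in `V`, lie in a cone without lines. Up to scaling they form a compact subset of a
finite-dimensional image, whose convex hull avoids `0`, and Hahn–Banach gives a functional `l` with
`l f < 0` and `l (star g * g) > 0` for all nonzero `g` in `V`.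

For the inner product `(a, b) ↦ l (star a * b)` on `V`, let `Xᵢ` be left multiplication by `xᵢ`
followed by the orthogonal projection onto `V`. It is symmetric because `xᵢ` is, and suffix-closure
makes the projection invisible when `f(X)` acts on `1`, so `⟨1, f(X) 1⟩ = l f < 0`.
-/

section ConvexCones

theorem isCompact_convexHull {E : Type*} [AddCommGroup E] [Module ℝ E] [TopologicalSpace E]
    [ContinuousAdd E] [ContinuousSMul ℝ E] [FiniteDimensional ℝ E] {s : Set E}
    (hs : IsCompact s) : IsCompact (convexHull ℝ s) := by
  let combinations (n : ℕ) : Set E :=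
    (fun p : (Fin n → ℝ) × (Fin n → E) ↦ ∑ i, p.1 i • p.2 i) ''
      (stdSimplex ℝ (Fin n) ×ˢ Set.univ.pi fun _ ↦ s)
  have isCompact_combinations (n : ℕ) : IsCompact (combinations n) :=
    ((isCompact_stdSimplex ℝ _).prod (isCompact_univ_pi fun _ ↦ hs)).image (by fun_prop)
  have caratheodory :
      convexHull ℝ s = ⋃ n ∈ Finset.range (Module.finrank ℝ E + 2), combinations n := by
    refine subset_antisymm (fun x hx ↦ ?_) (Set.iUnion₂_subset fun n _ ↦ ?_)
    · obtain ⟨ι, _, z, w, hz, hind, hw, hw1, rfl⟩ := eq_pos_convex_span_of_mem_convexHull hx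
      have hcard : Fintype.card ι < Module.finrank ℝ E + 2 :=
        Nat.lt_succ_of_le <| hind.card_le_finrank_succ.trans <|
          Nat.succ_le_succ (Submodule.finrank_le _)
      let e := (Fintype.equivFin ι).symm
      refine Set.mem_biUnion (Finset.mem_coe.2 (Finset.mem_range.2 hcard))
        ⟨(w ∘ e, z ∘ e), ⟨⟨fun i ↦ (hw _).le, ?_⟩, fun i _ ↦ hz ⟨e i, rfl⟩⟩, ?_⟩
      · exact (e.sum_comp w).trans hw1
      · exact e.sum_comp fun i ↦ w i • z i
    · rintro _ ⟨⟨w, z⟩, ⟨⟨hw, hw1⟩, hz⟩, rfl⟩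
      exact (convex_convexHull ℝ s).sum_mem (fun i _ ↦ hw i) hw1
        fun i _ ↦ subset_convexHull ℝ s (hz i trivial)
  rw [caratheodory]
  exact Finset.isCompact_biUnion _ fun n _ ↦ isCompact_combinations n

variable {𝕜 M : Type*} [Field 𝕜] [LinearOrder 𝕜] [AddCommGroup M] [Module 𝕜 M]

theorem convex_diff_singleton_zero_of_salient {K : ConvexCone 𝕜 M} (hK : K.Salient) :
    Convex 𝕜 ((K : Set M) \ {0}) := by
  refine convex_iff_forall_pos.2 fun x hx y hy a b ha hb _ ↦
    ⟨K.add_mem (K.smul_mem ha hx.1) (K.smul_mem hb hy.1), fun h ↦ ?_⟩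
  refine hK _ (K.smul_mem ha hx.1) (smul_ne_zero ha.ne' hx.2) ?_
  rw [neg_eq_of_add_eq_zero_right h]
  exact K.smul_mem hb hy.1

theorem salient_sup_hull_neg [IsStrictOrderedRing 𝕜] {K : PointedCone 𝕜 M}
    (hK : (K : ConvexCone 𝕜 M).Salient) {f : M} (hf : f ∉ K) :
    ((K ⊔ PointedCone.hull 𝕜 {-f} : PointedCone 𝕜 M) : ConvexCone 𝕜 M).Salient := by
  intro x hx hx0 hnx
  obtain ⟨a, ha, _, hs, rfl⟩ := Submodule.mem_sup.1 hx
  obtain ⟨b, hb, _, ht, hab⟩ := Submodule.mem_sup.1 hnx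
  obtain ⟨⟨s, s_nonneg⟩, rfl⟩ := Submodule.mem_span_singleton.1 hs
  obtain ⟨⟨t, t_nonneg⟩, rfl⟩ := Submodule.mem_span_singleton.1 ht
  simp only [Nonneg.mk_smul] at hx0 hab
  have hsum : a + b = (s + t) • f := by
    rw [eq_sub_of_add_eq hab]
    module
  rcases (add_nonneg s_nonneg t_nonneg).eq_or_lt with hst | hst
  · obtain ⟨rfl, rfl⟩ := (add_eq_zero_iff_of_nonneg s_nonneg t_nonneg).1 hst.symm
    simp only [zero_smul, add_zero] at hx0 hsum
    exact hK a ha hx0 (neg_eq_of_add_eq_zero_right hsum ▸ hb)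
  · refine hf ?_
    rw [← inv_smul_smul₀ hst.ne' f, ← hsum]
    exact K.smul_mem (inv_nonneg.2 hst.le) (K.add_mem ha hb)

end ConvexCones

section Separation

theorem exists_dual_pos_of_isCompact {E M : Type*} [NormedAddCommGroup E] [NormedSpace ℝ E]
    [FiniteDimensional ℝ E] [AddCommGroup M] [Module ℝ M] {K : ConvexCone ℝ M} (hK : K.Salient)
    (T : E →ₗ[ℝ] M) {s : Set E} (hs : IsCompact s) (hT : ∀ x ∈ s, T x ∈ K ∧ T x ≠ 0) :
    ∃ l : Module.Dual ℝ M, ∀ x ∈ s, 0 < l (T x) := by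
  have hdisj : Disjoint (convexHull ℝ s) (LinearMap.ker T : Set E) := by
    refine Set.disjoint_left.2 fun x hx hx0 ↦ ?_
    have hTx : T x ∈ (K : Set M) \ {0} :=
      convexHull_min (Set.image_subset_iff (t := (K : Set M) \ {0}).2 hT)
        (convex_diff_singleton_zero_of_salient hK)
        (T.image_convexHull s ▸ Set.mem_image_of_mem T hx)
    exact hTx.2 hx0
  obtain ⟨φ, u, v, hu, huv, hv⟩ := geometric_hahn_banach_compact_closed (convex_convexHull ℝ s)
    (isCompact_convexHull hs) (LinearMap.ker T).convex (LinearMap.ker T).closed_of_finiteDimensional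
    hdisj
  have hφ (x : E) (hx : x ∈ LinearMap.ker T) : φ x = 0 := by
    by_contra h
    have hlt := hv _ (Submodule.smul_mem _ (v / φ x) hx)
    rw [map_smul, smul_eq_mul, div_mul_cancel₀ v h] at hlt
    exact hlt.false
  obtain ⟨l, hl⟩ : (φ : Module.Dual ℝ E) ∈ LinearMap.range T.dualMap := by
    rw [LinearMap.range_dualMap_eq_dualAnnihilator_ker, Submodule.mem_dualAnnihilator]
    exact hφ
  have hv0 : v < 0 := map_zero φ ▸ hv 0 (zero_mem _)
  refine ⟨-l, fun x hx ↦ ?_⟩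
  have hlx : l (T x) = φ x := LinearMap.congr_fun hl x
  have := hu x (subset_convexHull ℝ s hx)
  rw [LinearMap.neg_apply, hlx]
  linarith

theorem exists_dual_neg_pos_of_notMem {V M : Type*} [AddCommGroup V] [Module ℝ V]
    [FiniteDimensional ℝ V] [AddCommGroup M] [Module ℝ M] (B : V →ₗ[ℝ] V →ₗ[ℝ] M)
    {K : PointedCone ℝ M} (hK : (K : ConvexCone ℝ M).Salient)
    (hB : ∀ x, x ≠ 0 → B x x ∈ K ∧ B x x ≠ 0) {f : M} (hf : f ∉ K) :
    ∃ l : Module.Dual ℝ M, l f < 0 ∧ ∀ x, x ≠ 0 → 0 < l (B x x) := by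
  obtain ⟨n, ⟨b⟩⟩ : ∃ n, Nonempty (Module.Basis (Fin n) ℝ V) := ⟨_, ⟨Module.finBasis ℝ V⟩⟩
  -- `B x x` is the image of the rank-one matrix of the coordinates of `x`; the additional real
  -- coordinate makes `l f < 0` one more positivity condition, at `(0, 1)`.
  let T : (Fin n × Fin n → ℝ) × ℝ →ₗ[ℝ] M :=
    (Fintype.linearCombination ℝ fun p : Fin n × Fin n ↦ B (b p.1) (b p.2)).coprod
      (LinearMap.toSpanSingleton ℝ M (-f))
  have T_square (c : Fin n → ℝ) :
      T (fun p ↦ c p.1 * c p.2, 0) = B (b.equivFun.symm c) (b.equivFun.symm c) := by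
    simp [T, Fintype.linearCombination_apply, Fintype.sum_prod_type_right, Finset.smul_sum,
      smul_smul, mul_comm]
  have T_neg : T (0, 1) = -f := by simp [T]
  let s : Set ((Fin n × Fin n → ℝ) × ℝ) :=
    insert (0, 1) ((fun c : Fin n → ℝ ↦ (fun p ↦ c p.1 * c p.2, 0)) '' Metric.sphere 0 1)
  have hs : IsCompact s := ((isCompact_sphere 0 1).image (by fun_prop)).insert _
  let K' : PointedCone ℝ M := K ⊔ PointedCone.hull ℝ {-f}
  have hneg : -f ∈ K' := Submodule.mem_sup_right (Submodule.mem_span_singleton_self _)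
  have hf0 : f ≠ 0 := fun h ↦ hf (h ▸ K.zero_mem)
  obtain ⟨l, hl⟩ := exists_dual_pos_of_isCompact (salient_sup_hull_neg hK hf) T hs <| by
    rintro _ (rfl | ⟨c, hc, rfl⟩)
    · exact T_neg.symm ▸ ⟨hneg, neg_ne_zero.2 hf0⟩
    · have hc0 : b.equivFun.symm c ≠ 0 :=
        b.equivFun.symm.map_ne_zero_iff.2 (ne_zero_of_mem_unit_sphere ⟨c, hc⟩)
      exact T_square c ▸ ⟨Submodule.mem_sup_left (hB _ hc0).1, (hB _ hc0).2⟩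
  refine ⟨l, ?_, fun x hx ↦ ?_⟩
  · simpa [T_neg] using hl _ (Set.mem_insert _ _)
  · let c := b.equivFun x
    have hc : c ≠ 0 := b.equivFun.map_ne_zero_iff.2 hx
    have hmem : ‖c‖⁻¹ • c ∈ Metric.sphere 0 1 := by
      simpa using norm_smul_inv_norm (𝕜 := ℝ) hc
    have hpos := hl _ (Set.mem_insert_of_mem _ ⟨_, hmem, rfl⟩)
    simp only [T_square, map_smul, LinearMap.smul_apply, c, LinearEquiv.symm_apply_apply,
      smul_eq_mul, ← mul_assoc] at hpos
    exact pos_of_mul_pos_right hpos (mul_self_nonneg _)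

end Separation

section HermitianSquares

variable {A : Type*} [Ring A] [StarRing A] [Algebra ℝ A] [StarModule ℝ A]

variable (A) in
/-- The cone of sums of hermitian squares `star g * g`. -/
def hermitianSquareCone : PointedCone ℝ A where
  carrier := {a | ∃ (m : ℕ) (g : Fin m → A), a = ∑ i, star (g i) * g i}
  zero_mem' := ⟨0, 0, by simp⟩
  add_mem' := by
    rintro _ _ ⟨m, g, rfl⟩ ⟨n, h, rfl⟩
    exact ⟨m + n, Fin.append g h, by simp [Fin.sum_univ_add]⟩
  smul_mem' := by
    rintro ⟨r, hr⟩ _ ⟨m, g, rfl⟩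
    refine ⟨m, fun i ↦ √r • g i, ?_⟩
    simp [Nonneg.mk_smul, Finset.smul_sum, smul_smul, Real.mul_self_sqrt hr]

theorem mem_hermitianSquareCone {a : A} :
    a ∈ hermitianSquareCone A ↔ ∃ (m : ℕ) (g : Fin m → A), a = ∑ i, star (g i) * g i :=
  Iff.rfl

theorem star_mul_self_mem_hermitianSquareCone (g : A) : star g * g ∈ hermitianSquareCone A :=
  ⟨1, fun _ ↦ g, by simp⟩

variable (A) in
/-- The product `(a, b) ↦ star a * b` as a bilinear map; it is bilinear rather than sesquilinear
because the star of `ℝ` is trivial. -/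
def starMulBilin : A →ₗ[ℝ] A →ₗ[ℝ] A :=
  LinearMap.mk₂ ℝ (fun a b ↦ star a * b) (by simp [add_mul]) (by simp) (by simp [mul_add])
    (by simp)

theorem salient_hermitianSquareCone
    (hA : ∀ (m : ℕ) (g : Fin m → A), ∑ i, star (g i) * g i = 0 → g = 0) :
    (hermitianSquareCone A : ConvexCone ℝ A).Salient := by
  rintro _ ⟨m, g, rfl⟩ hne ⟨n, h, hgh⟩
  have hsum : ∑ i, star (Fin.append g h i) * Fin.append g h i = 0 := by
    simp [Fin.sum_univ_add, ← hgh]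
  refine hne (Finset.sum_eq_zero fun i _ ↦ ?_)
  have hi : Fin.append g h (Fin.castAdd n i) = 0 := congrFun (hA _ _ hsum) _
  rw [Fin.append_left] at hi
  rw [hi, mul_zero]

theorem exists_hermitian_dual_neg_pos
    (hA : ∀ (m : ℕ) (g : Fin m → A), ∑ i, star (g i) * g i = 0 → g = 0)
    (V : Submodule ℝ A) [FiniteDimensional ℝ V] {f : A} (hf : IsSelfAdjoint f)
    (hfK : f ∉ hermitianSquareCone A) :
    ∃ l : Module.Dual ℝ A, (∀ a, l (star a) = l a) ∧ l f < 0 ∧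
      ∀ g ∈ V, g ≠ 0 → 0 < l (star g * g) := by
  let starMul : V →ₗ[ℝ] V →ₗ[ℝ] A := (starMulBilin A).domRestrict₁₂ V V
  have hpos (g : V) (hg : g ≠ 0) :
      starMul g g ∈ hermitianSquareCone A ∧ starMul g g ≠ 0 := by
    refine ⟨star_mul_self_mem_hermitianSquareCone _, fun h ↦ hg ?_⟩
    exact Subtype.ext (congrFun (hA 1 (fun _ ↦ g) ((Fin.sum_univ_one _).trans h)) 0)
  obtain ⟨l, hlf, hl⟩ :=
    exists_dual_neg_pos_of_notMem starMul (salient_hermitianSquareCone hA) hpos hfK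
  let hermitianPart : A →ₗ[ℝ] A := (selfAdjoint.submodule ℝ A).subtype ∘ₗ selfAdjointPart ℝ
  have hermitianPart_star (a : A) : hermitianPart (star a) = hermitianPart a :=
    congrArg Subtype.val (Subtype.ext (by simp [add_comm]) :
      selfAdjointPart ℝ (star a) = selfAdjointPart ℝ a)
  have hermitianPart_eq {a : A} (ha : IsSelfAdjoint a) : hermitianPart a = a :=
    ha.coe_selfAdjointPart_apply ℝ
  refine ⟨l ∘ₗ hermitianPart, fun a ↦ congrArg l (hermitianPart_star a), ?_, fun g hg hg0 ↦ ?_⟩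
  · rwa [LinearMap.comp_apply, hermitianPart_eq hf]
  · rw [LinearMap.comp_apply, hermitianPart_eq (IsSelfAdjoint.star_mul_self g)]
    exact hl ⟨g, hg⟩ (by simpa using hg0)

end HermitianSquares

section Words

open FreeAlgebra

variable {R α : Type*} [CommSemiring R]

theorem length_star_freeMonoid (w : FreeMonoid α) : (star w).length = w.length :=
  List.length_reverse (as := w.toList)

theorem basisFreeMonoid_eq_lift (w : FreeMonoid α) :
    basisFreeMonoid R α w = FreeMonoid.lift (ι R) w := by
  simp [basisFreeMonoid, equivMonoidAlgebraFreeMonoid]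

theorem basisFreeMonoid_one : basisFreeMonoid R α 1 = 1 := by
  rw [basisFreeMonoid_eq_lift, map_one]

theorem basisFreeMonoid_of_mul (x : α) (w : FreeMonoid α) :
    basisFreeMonoid R α (.of x * w) = ι R x * basisFreeMonoid R α w := by
  simp only [basisFreeMonoid_eq_lift, map_mul, FreeMonoid.lift_eval_of]

theorem star_basisFreeMonoid (w : FreeMonoid α) :
    star (basisFreeMonoid R α w) = basisFreeMonoid R α (star w) := by
  induction w using FreeMonoid.inductionOn' with
  | one => simp [basisFreeMonoid_one]
  | of_mul x w ih =>
    rw [basisFreeMonoid_of_mul, star_mul, ih, star_mul, FreeMonoid.star_of, star_ι]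
    simp only [basisFreeMonoid_eq_lift, map_mul, FreeMonoid.lift_eval_of]

theorem star_smul_freeAlgebra (r : R) (a : FreeAlgebra R α) : star (r • a) = r • star a := by
  rw [Algebra.smul_def, star_mul, star_algebraMap, ← Algebra.commutes, ← Algebra.smul_def]

instance [Star R] [TrivialStar R] : StarModule R (FreeAlgebra R α) where
  star_smul r a := by rw [star_smul_freeAlgebra, star_trivial r]

theorem basisFreeMonoid_repr_star (a : FreeAlgebra R α) (w : FreeMonoid α) :
    (basisFreeMonoid R α).repr (star a) w = (basisFreeMonoid R α).repr a (star w) := by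
  classical
  induction (basisFreeMonoid R α).mem_span a using Submodule.span_induction with
  | mem _ h =>
    obtain ⟨u, rfl⟩ := h
    have hu : star u = w ↔ u = star w := star_eq_iff_star_eq.trans eq_comm
    simp [star_basisFreeMonoid, Finsupp.single_apply, hu]
  | zero => simp
  | add a b _ _ ha hb => simp [ha, hb]
  | smul r a _ ha => simp [star_smul_freeAlgebra, ha]

theorem basisFreeMonoid_repr_star_mul {a b : FreeAlgebra R α} {w : FreeMonoid α}
    (ha : ∀ u ∈ ((basisFreeMonoid R α).repr a).support, u.length ≤ w.length)
    (hb : ∀ u ∈ ((basisFreeMonoid R α).repr b).support, u.length ≤ w.length) :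
    (basisFreeMonoid R α).repr (star a * b) (star w * w) =
      (basisFreeMonoid R α).repr a w * (basisFreeMonoid R α).repr b w := by
  have hunique : UniqueMul (equivMonoidAlgebraFreeMonoid (star a)).coeff.support
      (equivMonoidAlgebraFreeMonoid b).coeff.support (star w) w := by
    intro u v hu hv huv
    have hu' : u.length ≤ w.length := by
      rw [← length_star_freeMonoid]
      refine ha _ ?_
      rw [Finsupp.mem_support_iff, ← basisFreeMonoid_repr_star]
      exact Finsupp.mem_support_iff.1 hu
    have hv' : v.length ≤ w.length := hb v hv
    have hlen : u.length + v.length = w.length + w.length := by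
      rw [← FreeMonoid.length_mul, huv, FreeMonoid.length_mul, length_star_freeMonoid]
    exact List.append_inj huv <| by
      change u.length = (star w).length
      rw [length_star_freeMonoid]
      omega
  calc (basisFreeMonoid R α).repr (star a * b) (star w * w)
      = (equivMonoidAlgebraFreeMonoid (star a) * equivMonoidAlgebraFreeMonoid b).coeff
          (star w * w) := by
        rw [← map_mul]; rfl
    _ = (basisFreeMonoid R α).repr (star a) (star w) * (basisFreeMonoid R α).repr b w :=
        MonoidAlgebra.coeff_mul_mul_of_uniqueMul hunique
    _ = _ := by rw [basisFreeMonoid_repr_star, star_star]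

end Words

section Definite

open FreeAlgebra

variable {R α κ : Type*} [CommRing R] [LinearOrder R] [IsStrictOrderedRing R] [Fintype κ]

theorem eq_zero_of_sum_star_mul_self_eq_zero {g : κ → FreeAlgebra R α}
    (h : ∑ i, star (g i) * g i = 0) : g = 0 := by
  classical
  let coeff (i : κ) := (basisFreeMonoid R α).repr (g i)
  by_contra hg
  obtain ⟨i, hi⟩ := Function.ne_iff.1 hg
  obtain ⟨u, hu⟩ := Finsupp.support_nonempty_iff.2
    ((basisFreeMonoid R α).repr.map_ne_zero_iff.2 hi)
  obtain ⟨w, hw, longest⟩ := (Finset.univ.biUnion fun i ↦ (coeff i).support).exists_max_image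
    FreeMonoid.length ⟨u, Finset.mem_biUnion.2 ⟨i, Finset.mem_univ i, hu⟩⟩
  obtain ⟨j, -, hj⟩ := Finset.mem_biUnion.1 hw
  have hlength (i : κ) (u : FreeMonoid α) (hu : u ∈ (coeff i).support) : u.length ≤ w.length :=
    longest u (Finset.mem_biUnion.2 ⟨i, Finset.mem_univ i, hu⟩)
  have hsum : ∑ i, coeff i w * coeff i w = 0 := by
    simp_rw [coeff, ← fun i ↦ basisFreeMonoid_repr_star_mul (hlength i) (hlength i)]
    rw [← Finsupp.finsetSum_apply, ← map_sum, h, map_zero, Finsupp.zero_apply]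
  exact Finsupp.mem_support_iff.1 hj <| mul_self_eq_zero.1 <|
    (Finset.sum_eq_zero_iff_of_nonneg fun _ _ ↦ mul_self_nonneg _).1 hsum j (Finset.mem_univ j)

end Definite

section Evaluation

open FreeAlgebra

variable {R α n : Type*} [CommRing R] [Fintype n] [DecidableEq n] {X : α → Matrix n n R}

theorem lift_star_eq_transpose (hX : ∀ i, (X i).IsSymm) (a : FreeAlgebra R α) :
    lift R X (star a) = (lift R X a)ᵀ := by
  induction a using FreeAlgebra.induction with
  | grade0 r => simp [Matrix.algebraMap_eq_diagonal]
  | grade1 x => simp [(hX x).eq]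
  | mul a b ha hb => rw [star_mul, map_mul, map_mul, transpose_mul, ha, hb]
  | add a b ha hb => rw [star_add, map_add, map_add, transpose_add, ha, hb]

theorem dotProduct_lift_star_mul_mulVec (hX : ∀ i, (X i).IsSymm) (a b : FreeAlgebra R α)
    (v : n → R) :
    v ⬝ᵥ lift R X (star a * b) *ᵥ v = (lift R X a *ᵥ v) ⬝ᵥ (lift R X b *ᵥ v) := by
  rw [map_mul, lift_star_eq_transpose hX, ← mulVec_mulVec, dotProduct_mulVec, vecMul_transpose]

theorem dotProduct_lift_mulVec_nonneg_of_mem_hermitianSquareCone {X : α → Matrix n n ℝ}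
    (hX : ∀ i, (X i).IsSymm) {f : FreeAlgebra ℝ α}
    (hf : f ∈ hermitianSquareCone (FreeAlgebra ℝ α)) (v : n → ℝ) :
    0 ≤ v ⬝ᵥ lift ℝ X f *ᵥ v := by
  obtain ⟨m, g, rfl⟩ := mem_hermitianSquareCone.1 hf
  rw [map_sum, sum_mulVec, dotProduct_sum]
  refine Finset.sum_nonneg fun i _ ↦ ?_
  rw [dotProduct_lift_star_mul_mulVec hX]
  exact Finset.sum_nonneg fun _ _ ↦ mul_self_nonneg _

end Evaluation

section GNS

variable {A κ : Type*} [Ring A] [StarRing A] [Algebra ℝ A] {l : Module.Dual ℝ A} {e : κ → A}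

/-- The coordinates of `a` in a family `e` that is orthonormal for the form
`(a, b) ↦ l (star a * b)`. -/
def gnsCoord (l : Module.Dual ℝ A) (e : κ → A) : A →ₗ[ℝ] κ → ℝ :=
  LinearMap.pi fun j ↦ l ∘ₗ LinearMap.mulLeft ℝ (star (e j))

theorem gnsCoord_apply (a : A) (j : κ) : gnsCoord l e a j = l (star (e j) * a) := rfl

/-- The matrix, in a family `e` that is orthonormal for the form `(a, b) ↦ l (star a * b)`, of left
multiplication by `a` compressed to the span of `e`. -/
def gnsMatrix (l : Module.Dual ℝ A) (e : κ → A) (a : A) : Matrix κ κ ℝ :=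
  of fun i j ↦ l (star (e i) * (a * e j))

theorem isSymm_gnsMatrix (hl : ∀ a, l (star a) = l a) {a : A} (ha : IsSelfAdjoint a) :
    (gnsMatrix l e a).IsSymm := by
  ext i j
  rw [transpose_apply, gnsMatrix, of_apply, of_apply, ← hl]
  simp [ha.star_eq, mul_assoc]

variable [Fintype κ]

theorem gnsMatrix_mulVec_gnsCoord {p : A} (hp : ∑ j, gnsCoord l e p j • e j = p) (a : A) :
    gnsMatrix l e a *ᵥ gnsCoord l e p = gnsCoord l e (a * p) := by
  ext i
  calc ∑ j, l (star (e i) * (a * e j)) * gnsCoord l e p j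
      = l (star (e i) * (a * ∑ j, gnsCoord l e p j • e j)) := by
        simp [Finset.mul_sum, mul_comm]
    _ = gnsCoord l e (a * p) i := by rw [hp, gnsCoord_apply]

theorem gnsCoord_dotProduct_gnsCoord [StarModule ℝ A] {p : A}
    (hp : ∑ j, gnsCoord l e p j • e j = p) (q : A) :
    gnsCoord l e p ⬝ᵥ gnsCoord l e q = l (star p * q) := by
  calc ∑ j, gnsCoord l e p j * gnsCoord l e q j
      = l (star (∑ j, gnsCoord l e p j • e j) * q) := by
        simp [Finset.sum_mul, star_sum, gnsCoord_apply]
    _ = l (star p * q) := by rw [hp]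

theorem exists_orthonormal_expansion {V : Type*} [AddCommGroup V] [Module ℝ V]
    [FiniteDimensional ℝ V] {B : LinearMap.BilinForm ℝ V} (symm : ∀ x y, B x y = B y x)
    (pos : ∀ x, x ≠ 0 → 0 < B x x) :
    ∃ (n : ℕ) (e : Fin n → V), ∀ x, ∑ j, B (e j) x • e j = x := by
  let core : InnerProductSpace.Core ℝ V :=
    { inner x y := B x y
      conj_inner_symm x y := symm y x
      re_inner_nonneg x := by
        rcases eq_or_ne x 0 with rfl | hx
        · simp
        · exact (pos x hx).le
      add_left x y z := by simp
      smul_left x y r := by simp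
      definite x hx := by_contra fun h ↦ (pos x h).ne' hx }
  let : NormedAddCommGroup V := core.toNormedAddCommGroup
  let : InnerProductSpace ℝ V := InnerProductSpace.ofCore core.toCore
  exact ⟨_, stdOrthonormalBasis ℝ V, (stdOrthonormalBasis ℝ V).sum_repr'⟩

theorem exists_sum_gnsCoord_smul_eq [StarModule ℝ A] (hl : ∀ a, l (star a) = l a)
    (V : Submodule ℝ A) [FiniteDimensional ℝ V] (hpos : ∀ g ∈ V, g ≠ 0 → 0 < l (star g * g)) :
    ∃ (n : ℕ) (e : Fin n → A), ∀ p ∈ V, ∑ j, gnsCoord l e p j • e j = p := by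
  let form : LinearMap.BilinForm ℝ V := ((starMulBilin A).compr₂ l).domRestrict₁₂ V V
  have form_symm (x y : V) : form x y = form y x := by
    change l (star (x : A) * y) = l (star (y : A) * x)
    rw [← hl, star_mul, star_star]
  obtain ⟨n, e, he⟩ := exists_orthonormal_expansion form_symm
    fun x hx ↦ hpos x x.2 (by simpa using hx)
  refine ⟨n, fun j ↦ e j, fun p hp ↦ ?_⟩
  calc ∑ j, gnsCoord l (fun j ↦ (e j : A)) p j • (e j : A)
      = ((∑ j, form (e j) ⟨p, hp⟩ • e j : V) : A) := by
        rw [Submodule.coe_sum]; rfl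
    _ = p := congrArg Subtype.val (he ⟨p, hp⟩)

end GNS

section Truncation

open FreeAlgebra

variable {α : Type*}

/-- A set of words closed under deleting the first letter, hence under taking suffixes. -/
def IsSuffixClosed (W : Set (FreeMonoid α)) : Prop :=
  ∀ (x : α) (w : FreeMonoid α), .of x * w ∈ W → w ∈ W

theorem exists_finite_isSuffixClosed (s : Finset (FreeMonoid α)) :
    ∃ W : Set (FreeMonoid α), W.Finite ∧ IsSuffixClosed W ∧ 1 ∈ W ∧ ↑s ⊆ W := by
  refine ⟨{1} ∪ ⋃ u ∈ s, {w | w.toList <:+ u.toList}, ?_, fun x w hw ↦ ?_, ?_, fun u hu ↦ ?_⟩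
  · refine (Set.finite_singleton _).union (s.finite_toSet.biUnion fun u _ ↦ ?_)
    exact u.toList.tails.finite_toSet.subset fun w hw ↦ (List.mem_tails _ _).2 hw
  · obtain hw | hw := hw
    · exact absurd hw (List.cons_ne_nil x w.toList)
    · obtain ⟨u, hu, hsuffix⟩ := Set.mem_iUnion₂.1 hw
      exact Or.inr (Set.mem_biUnion hu ((List.suffix_cons x w.toList).trans hsuffix))
  · exact Or.inl rfl
  · exact Or.inr (Set.mem_biUnion hu List.suffix_rfl)

variable {κ : Type*} [Fintype κ] [DecidableEq κ] {l : Module.Dual ℝ (FreeAlgebra ℝ α)}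
  {e : κ → FreeAlgebra ℝ α} {W : Set (FreeMonoid α)}

theorem lift_gnsMatrix_basisFreeMonoid_mulVec (hW : IsSuffixClosed W)
    (he : ∀ w ∈ W, ∑ j, gnsCoord l e (basisFreeMonoid ℝ α w) j • e j = basisFreeMonoid ℝ α w)
    {w : FreeMonoid α} (hw : w ∈ W) :
    lift ℝ (fun x ↦ gnsMatrix l e (ι ℝ x)) (basisFreeMonoid ℝ α w) *ᵥ gnsCoord l e 1 =
      gnsCoord l e (basisFreeMonoid ℝ α w) := by
  induction w using FreeMonoid.inductionOn' with
  | one => simp [basisFreeMonoid_one]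
  | of_mul x w ih =>
    have hw' := hW x w hw
    rw [basisFreeMonoid_of_mul, map_mul, ← mulVec_mulVec, ih hw', lift_ι_apply,
      gnsMatrix_mulVec_gnsCoord (he w hw')]

theorem lift_gnsMatrix_mulVec_gnsCoord_one (hW : IsSuffixClosed W)
    (he : ∀ p ∈ Submodule.span ℝ (basisFreeMonoid ℝ α '' W), ∑ j, gnsCoord l e p j • e j = p)
    {p : FreeAlgebra ℝ α} (hp : p ∈ Submodule.span ℝ (basisFreeMonoid ℝ α '' W)) :
    lift ℝ (fun x ↦ gnsMatrix l e (ι ℝ x)) p *ᵥ gnsCoord l e 1 = gnsCoord l e p := by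
  have hword (w : FreeMonoid α) (hw : w ∈ W) :=
    he _ (Submodule.subset_span (Set.mem_image_of_mem _ hw))
  induction hp using Submodule.span_induction with
  | mem _ h =>
    obtain ⟨w, hw, rfl⟩ := h
    exact lift_gnsMatrix_basisFreeMonoid_mulVec hW hword hw
  | zero => simp
  | add p q _ _ hp hq => rw [map_add, map_add, add_mulVec, hp, hq]
  | smul r p _ hp => rw [map_smul, map_smul, smul_mulVec, hp]

theorem exists_isSymm_dotProduct_lift_mulVec_eq (hfin : W.Finite) (hW : IsSuffixClosed W)
    (hone : 1 ∈ W) (hl : ∀ a, l (star a) = l a)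
    (hpos : ∀ g ∈ Submodule.span ℝ (basisFreeMonoid ℝ α '' W), g ≠ 0 → 0 < l (star g * g)) :
    ∃ n, 1 ≤ n ∧ ∃ X : α → Matrix (Fin n) (Fin n) ℝ, (∀ i, (X i).IsSymm) ∧ ∃ v : Fin n → ℝ,
      ∀ f ∈ Submodule.span ℝ (basisFreeMonoid ℝ α '' W), v ⬝ᵥ lift ℝ X f *ᵥ v = l f := by
  have := FiniteDimensional.span_of_finite ℝ (hfin.image (basisFreeMonoid ℝ α))
  obtain ⟨n, e, he⟩ := exists_sum_gnsCoord_smul_eq hl _ hpos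
  have hone_span : (1 : FreeAlgebra ℝ α) ∈ Submodule.span ℝ (basisFreeMonoid ℝ α '' W) :=
    Submodule.subset_span ⟨1, hone, basisFreeMonoid_one⟩
  refine ⟨n, Nat.one_le_iff_ne_zero.2 ?_, fun x ↦ gnsMatrix l e (ι ℝ x),
    fun x ↦ isSymm_gnsMatrix hl (star_ι x), gnsCoord l e 1, fun f hf ↦ ?_⟩
  · rintro rfl
    simpa using he 1 hone_span
  · rw [lift_gnsMatrix_mulVec_gnsCoord_one hW he hf, gnsCoord_dotProduct_gnsCoord (he 1 hone_span),
      star_one, one_mul]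

end Truncation

theorem statement2_general {α : Type*} {f : FreeAlgebra ℝ α} (hf : star f = f) :
    (∀ n : ℕ, 1 ≤ n → ∀ X : α → Matrix (Fin n) (Fin n) ℝ, (∀ i, (X i)ᵀ = X i) →
        ∀ v : Fin n → ℝ, 0 ≤ v ⬝ᵥ (FreeAlgebra.lift ℝ X f).mulVec v) ↔
      ∃ (m : ℕ) (g : Fin m → FreeAlgebra ℝ α), f = ∑ i, star (g i) * g i := by
  rw [← mem_hermitianSquareCone]
  refine ⟨fun hpsd ↦ ?_, fun hsq n _ X hX ↦
    dotProduct_lift_mulVec_nonneg_of_mem_hermitianSquareCone hX hsq⟩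
  by_contra hsq
  obtain ⟨W, hfin, hW, hone, hfW⟩ :=
    exists_finite_isSuffixClosed ((FreeAlgebra.basisFreeMonoid ℝ α).repr f).support
  have := FiniteDimensional.span_of_finite ℝ (hfin.image (FreeAlgebra.basisFreeMonoid ℝ α))
  obtain ⟨l, hl, hlf, hpos⟩ := exists_hermitian_dual_neg_pos
    (fun _ _ ↦ eq_zero_of_sum_star_mul_self_eq_zero)
    (Submodule.span ℝ (FreeAlgebra.basisFreeMonoid ℝ α '' W)) hf hsq
  obtain ⟨n, hn, X, hX, v, hv⟩ := exists_isSymm_dotProduct_lift_mulVec_eq hfin hW hone hl hpos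
  have hnonneg := hpsd n hn X hX v
  rw [hv f ((FreeAlgebra.basisFreeMonoid ℝ α).mem_span_image.2 hfW)] at hnonneg
  exact hnonneg.not_gt hlf

/-- **Helton's theorem.** A symmetric element `f` of the free algebra
`ℝ⟨x₁,…,x_d⟩` is positive semidefinite at every tuple of symmetric real matrices (of every
size `n ≥ 1`) iff it is a finite sum of hermitian squares `Σ (star gᵢ) gᵢ`. -/
theorem statement2 (d : ℕ) (hd : 1 ≤ d) (f : FreeAlgebra ℝ (Fin d))
    (hf : star f = f) :
    (∀ (n : ℕ), 1 ≤ n → ∀ X : Fin d → Matrix (Fin n) (Fin n) ℝ,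
        (∀ i, (X i)ᵀ = X i) →
        ∀ v : Fin n → ℝ, 0 ≤ v ⬝ᵥ ((FreeAlgebra.lift ℝ X f).mulVec v)) ↔
    (∃ (m : ℕ) (g : Fin m → FreeAlgebra ℝ (Fin d)),
        f = ∑ i, star (g i) * g i) :=
  statement2_general hf
end

section
/- Let ν, d ≥ 1 and let F ∈ M_ν(ℝ⟨x₁,…,x_d⟩) be a matrix over the free algebra with F* = F, where F* is the conjugate transpose formed using the involution star of ℝ⟨x₁,…,x_d⟩. Then the following are equivalent: (i) for every n ≥ 1 and every tuple X of symmetric matrices in M_n(ℝ), the νn × νn real matrix obtained by evaluating every entry of F at X is positive semidefinite; (ii) there exist finitely many matrices G₁,…,G_m ∈ M_ν(ℝ⟨x₁,…,x_d⟩) such that F = Σ_{i=1}^m Gᵢ* Gᵢ. -/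
open Matrix

/-!
Fix a finite suffix-closed set of words spanning the entries of `F`, and let `h` be the resulting
family of matrices with one nonzero entry. The vacuum state of the Fock representation gives a
functional `L₀` with `L₀ (a* a) > 0` for all `a ≠ 0`, whose Gram matrix on `h` is an order unit for
the cone of matrices with nonnegative quadratic form. By the Riesz extension theorem, if `L F ≥ 0`
for every functional `L` whose Gram matrix lies in this cone, then `L F = g (gram h L)` for some
functional `g` that is nonnegative on the cone. Such a `g` is the pairing with a positive
semidefinite matrix `P`, and factoring `P = Bᵀ B` writes `F` as a sum of hermitian squares.

After adding `ε L₀` and symmetrizing, `L` may be assumed hermitian with positive definite Gram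
matrix. A Gelfand–Naimark–Segal construction truncated to the span of `h` then represents the
generators by symmetric real matrices `Y` and gives a vector `v` with `L F = ⟨v, F(Y) v⟩`, which is
nonnegative when all evaluations of `F` are positive semidefinite.
-/

namespace HermitianSquares

section Forms

variable {I : Type*} [Fintype I]

lemma dotProduct_mulVec_eq_sum (M : Matrix I I ℝ) (v : I → ℝ) :
    v ⬝ᵥ M *ᵥ v = ∑ p, ∑ q, v p * v q * M p q := by
  simp only [dotProduct, mulVec, Finset.mul_sum, mul_assoc, mul_comm (M _ _)]

open scoped MatrixOrder in
lemma exists_transpose_mul_self_of_posSemidef {M : Matrix I I ℝ} (hM : M.PosSemidef) :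
    ∃ B : Matrix I I ℝ, M = Bᵀ * B := by
  classical
  obtain ⟨B, hB⟩ := CStarAlgebra.nonneg_iff_eq_star_mul_self.mp hM.nonneg
  exact ⟨B, by simpa [star_eq_conjTranspose, conjTranspose_eq_transpose_of_trivial] using hB⟩

/-- The cone of real matrices, not necessarily symmetric, whose quadratic form is nonnegative. -/
def nonnegForms (I : Type*) [Fintype I] : PointedCone ℝ (Matrix I I ℝ) where
  carrier := {M | ∀ v : I → ℝ, 0 ≤ v ⬝ᵥ M *ᵥ v}
  add_mem' {M N} hM hN v := by
    rw [add_mulVec, dotProduct_add]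
    exact add_nonneg (hM v) (hN v)
  zero_mem' v := by simp
  smul_mem' c M hM v := by
    rw [Nonneg.mk_smul, smul_mulVec, dotProduct_smul]
    exact mul_nonneg c.2 (hM v)

lemma exists_smul_add_mem_nonnegForms {P : Matrix I I ℝ} (hP : ∀ v ≠ 0, 0 < v ⬝ᵥ P *ᵥ v)
    (M : Matrix I I ℝ) : ∃ c : ℝ, c • P + M ∈ nonnegForms I := by
  let ratio (v : I → ℝ) : ℝ := (v ⬝ᵥ M *ᵥ v) / (v ⬝ᵥ P *ᵥ v)
  have hcont : ContinuousOn ratio (Metric.sphere 0 1) := by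
    refine ContinuousOn.div (by fun_prop) (by fun_prop) fun v hv => (hP v ?_).ne'
    exact ne_zero_of_mem_unit_sphere ⟨v, hv⟩
  obtain ⟨b, hb⟩ := (isCompact_sphere (0 : I → ℝ) 1).bddBelow_image hcont
  refine ⟨-b, fun v => ?_⟩
  obtain rfl | hv := eq_or_ne v 0
  · simp
  have hbv : b ≤ ratio v := by
    have hle := hb ⟨‖v‖⁻¹ • v, by simp [norm_smul, hv], rfl⟩
    have hscale : ‖v‖⁻¹ * ‖v‖⁻¹ ≠ 0 := by simpa using hv
    simpa only [ratio, mulVec_smul, dotProduct_smul, smul_dotProduct, smul_eq_mul, ← mul_assoc,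
      mul_div_mul_left _ _ hscale] using hle
  rw [le_div_iff₀ (hP v hv)] at hbv
  simp only [add_mulVec, smul_mulVec, dotProduct_add, dotProduct_smul, smul_eq_mul]
  linarith

lemma exists_posSemidef_of_nonneg_on_nonnegForms (g : Matrix I I ℝ →ₗ[ℝ] ℝ)
    (hg : ∀ M ∈ nonnegForms I, 0 ≤ g M) :
    ∃ P : Matrix I I ℝ, P.PosSemidef ∧ ∀ M, g M = ∑ p, ∑ q, P p q * M p q := by
  classical
  let P : Matrix I I ℝ := of fun p q => g (single p q 1)
  have hgP (M : Matrix I I ℝ) : g M = ∑ p, ∑ q, P p q * M p q := by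
    conv_lhs => rw [matrix_eq_sum_single M]
    simp only [map_sum]
    refine Finset.sum_congr rfl fun p _ => Finset.sum_congr rfl fun q _ => ?_
    rw [← mul_one (M p q), ← smul_eq_mul, ← smul_single, map_smul]
    simp [P, mul_comm]
  refine ⟨P, .of_dotProduct_mulVec_nonneg ?_ fun v => ?_, hgP⟩
  · have hle (p q : I) : g (single p q 1) ≤ g (single q p 1) := by
      rw [← sub_nonneg, ← map_sub]
      refine hg _ fun v => le_of_eq ?_
      rw [sub_mulVec, dotProduct_sub]
      simp [single_mulVec, dotProduct, Function.update_apply, mul_comm]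
    ext p q
    simpa [P] using le_antisymm (hle q p) (hle p q)
  · have hrank_one := hg (vecMulVec v v) fun w => by
      rw [vecMulVec_mulVec, dotProduct_smul, dotProduct_comm w v]
      simpa using mul_self_nonneg (v ⬝ᵥ w)
    rw [hgP] at hrank_one
    refine hrank_one.trans_eq ?_
    simp only [star_trivial, dotProduct_mulVec_eq_sum, vecMulVec_apply, mul_comm (P _ _)]

end Forms

section Gram

variable {A I : Type*} [Ring A] [StarRing A] [Algebra ℝ A]

/-- The Gram matrix of the family `h` under the bilinear form `(a, b) ↦ L (a* b)`, as a linear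
function of the functional `L`. -/
def gram (h : I → A) : (A →ₗ[ℝ] ℝ) →ₗ[ℝ] Matrix I I ℝ where
  toFun L := of fun p q => L (star (h p) * h q)
  map_add' _ _ := rfl
  map_smul' _ _ := rfl

lemma gram_apply (h : I → A) (L : A →ₗ[ℝ] ℝ) (p q : I) :
    gram h L p q = L (star (h p) * h q) := rfl

section Symmetrize

variable [StarModule ℝ A]

/-- Twice the hermitian part of a functional. -/
def symmetrize (L : A →ₗ[ℝ] ℝ) : A →ₗ[ℝ] ℝ where
  toFun a := L (a + star a)
  map_add' a b := by rw [star_add, add_add_add_comm, map_add]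
  map_smul' c a := by rw [star_smul, star_trivial c, ← smul_add, map_smul, RingHom.id_apply]

lemma symmetrize_apply (L : A →ₗ[ℝ] ℝ) (a : A) : symmetrize L a = L (a + star a) := rfl

lemma symmetrize_star (L : A →ₗ[ℝ] ℝ) (a : A) : symmetrize L (star a) = symmetrize L a := by
  rw [symmetrize_apply, symmetrize_apply, star_star, add_comm]

lemma gram_symmetrize (h : I → A) (L : A →ₗ[ℝ] ℝ) :
    gram h (symmetrize L) = gram h L + (gram h L)ᵀ := by
  ext p q
  simp [gram_apply, symmetrize_apply]

end Symmetrize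

variable [Fintype I]

/-- The combination `∑ P p q • h p* h q` of products of the family `h`; it is the adjoint of `gram`
for the entrywise pairing of matrices. -/
def gramSum (h : I → A) : Matrix I I ℝ →ₗ[ℝ] A where
  toFun P := ∑ p, ∑ q, P p q • (star (h p) * h q)
  map_add' P Q := by simp only [Matrix.add_apply, add_smul, Finset.sum_add_distrib]
  map_smul' c P := by simp only [Matrix.smul_apply, smul_assoc, ← Finset.smul_sum, RingHom.id_apply]

lemma gramSum_apply (h : I → A) (P : Matrix I I ℝ) :
    gramSum h P = ∑ p, ∑ q, P p q • (star (h p) * h q) := rfl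

lemma gramSum_single [DecidableEq I] (h : I → A) (p q : I) :
    gramSum h (single p q 1) = star (h p) * h q := by
  simp [gramSum_apply, single_apply, ite_and]

lemma apply_gramSum (h : I → A) (L : A →ₗ[ℝ] ℝ) (P : Matrix I I ℝ) :
    L (gramSum h P) = ∑ p, ∑ q, P p q * gram h L p q := by
  simp only [gramSum_apply, map_sum, map_smul, smul_eq_mul, gram_apply]

variable [StarModule ℝ A]

lemma gramSum_transpose_mul_self (h : I → A) (B : Matrix I I ℝ) :
    gramSum h (Bᵀ * B) = ∑ b, star (∑ p, B b p • h p) * ∑ p, B b p • h p := by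
  simp only [gramSum_apply, mul_apply, transpose_apply, Finset.sum_smul, star_sum, star_smul,
    star_trivial, Finset.sum_mul_sum, smul_mul_smul_comm]
  rw [Finset.sum_comm_cycle]

lemma dotProduct_gram_mulVec (h : I → A) (L : A →ₗ[ℝ] ℝ) (v : I → ℝ) :
    v ⬝ᵥ gram h L *ᵥ v = L (star (∑ p, v p • h p) * ∑ p, v p • h p) := by
  simp only [dotProduct_mulVec_eq_sum, gram_apply, star_sum, star_smul, star_trivial,
    Finset.sum_mul_sum, smul_mul_smul_comm, map_sum, map_smul, smul_eq_mul]

lemma dotProduct_gram_mulVec_pos {h : I → A} (hh : LinearIndependent ℝ h) {L : A →ₗ[ℝ] ℝ}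
    (hL : ∀ a ≠ 0, 0 < L (star a * a)) {v : I → ℝ} (hv : v ≠ 0) :
    0 < v ⬝ᵥ gram h L *ᵥ v := by
  rw [dotProduct_gram_mulVec]
  exact hL _ fun h0 => hv (funext (Fintype.linearIndependent_iff.mp hh v h0))

lemma posDef_gram_symmetrize {h : I → A} {L : A →ₗ[ℝ] ℝ}
    (hL : ∀ v ≠ 0, 0 < v ⬝ᵥ gram h L *ᵥ v) : (gram h (symmetrize L)).PosDef := by
  rw [gram_symmetrize]
  refine .of_dotProduct_mulVec_pos ?_ fun v hv => ?_
  · rw [← conjTranspose_eq_transpose_of_trivial]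
    exact isHermitian_add_transpose_self _
  · rw [star_trivial, add_mulVec, dotProduct_add, mulVec_transpose, dotProduct_comm v (v ᵥ* _),
      ← dotProduct_mulVec]
    exact add_pos (hL v hv) (hL v hv)

end Gram

section Duality

variable {A I : Type*} [Ring A] [StarRing A] [Algebra ℝ A] [Fintype I]

lemma nonneg_of_forall_pos_add_mul_nonneg {a b : ℝ} (h : ∀ ε > 0, 0 ≤ a + ε * b) : 0 ≤ a := by
  have hlim : Filter.Tendsto (fun ε : ℝ => a + ε * b) (nhdsWithin 0 (Set.Ioi 0)) (nhds a) :=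
    ((by fun_prop : Continuous fun ε : ℝ => a + ε * b).tendsto' 0 a (by simp)).mono_left
      nhdsWithin_le_nhds
  exact ge_of_tendsto hlim (eventually_mem_nhdsWithin.mono h)

theorem exists_posSemidef_gramSum_eq {h : I → A} {L₀ : A →ₗ[ℝ] ℝ}
    (hL₀ : ∀ v ≠ 0, 0 < v ⬝ᵥ gram h L₀ *ᵥ v) {F : A} (hF : F ∈ LinearMap.range (gramSum h))
    (hpos : ∀ L, gram h L ∈ nonnegForms I → 0 ≤ L F) :
    ∃ P : Matrix I I ℝ, P.PosSemidef ∧ gramSum h P = F := by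
  obtain ⟨C, rfl⟩ := hF
  let pairC : Matrix I I ℝ →ₗ[ℝ] ℝ := ∑ p, ∑ q, C p q • Matrix.entryLinearMap ℝ ℝ p q
  have hpairC (L : A →ₗ[ℝ] ℝ) : pairC (gram h L) = L (gramSum h C) := by
    simp [pairC, apply_gramSum]
  obtain ⟨g, hg_ext, hg_nonneg⟩ := riesz_extension (nonnegForms I)
    ⟨LinearMap.range (gram h), pairC.domRestrict _⟩
    (by
      rintro ⟨_, L, rfl⟩ hL
      exact (hpos L hL).trans_eq (hpairC L).symm)
    (fun M => by
      obtain ⟨c, hc⟩ := exists_smul_add_mem_nonnegForms hL₀ M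
      exact ⟨⟨gram h (c • L₀), _, rfl⟩, by simpa only [map_smul] using hc⟩)
  obtain ⟨P, hP, hgP⟩ := exists_posSemidef_of_nonneg_on_nonnegForms g hg_nonneg
  refine ⟨P, hP, sub_eq_zero.mp ((Module.forall_dual_apply_eq_zero_iff ℝ _).mp fun L => ?_)⟩
  rw [map_sub, sub_eq_zero]
  calc L (gramSum h P) = g (gram h L) := by rw [apply_gramSum, hgP]
    _ = pairC (gram h L) := hg_ext ⟨_, L, rfl⟩
    _ = L (gramSum h C) := hpairC L

theorem exists_eq_sum_star_mul_self [StarModule ℝ A] {h : I → A}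
    (hh : LinearIndependent ℝ h) {L₀ : A →ₗ[ℝ] ℝ}
    (hL₀ : ∀ a ≠ 0, 0 < L₀ (star a * a)) {F : A} (hF_star : star F = F)
    (hF : F ∈ LinearMap.range (gramSum h))
    (hpos : ∀ L, (∀ a, L (star a) = L a) → (gram h L).PosDef → 0 ≤ L F) :
    ∃ G : I → A, F = ∑ b, star (G b) * G b := by
  have hL₀_gram : ∀ v ≠ 0, 0 < v ⬝ᵥ gram h L₀ *ᵥ v :=
    fun v hv => dotProduct_gram_mulVec_pos hh hL₀ hv
  obtain ⟨P, hP, rfl⟩ := exists_posSemidef_gramSum_eq hL₀_gram hF fun L hL => by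
    refine nonneg_of_forall_pos_add_mul_nonneg (b := L₀ F) fun ε hε => ?_
    have hperturbed : ∀ v ≠ 0, 0 < v ⬝ᵥ gram h (L + ε • L₀) *ᵥ v := fun v hv => by
      rw [map_add, map_smul, add_mulVec, dotProduct_add, smul_mulVec, dotProduct_smul]
      exact add_pos_of_nonneg_of_pos (hL v) (mul_pos hε (hL₀_gram v hv))
    have hsymm := hpos _ (symmetrize_star _) (posDef_gram_symmetrize hperturbed)
    rw [symmetrize_apply, hF_star, map_add] at hsymm
    simpa using hsymm
  obtain ⟨B, rfl⟩ := exists_transpose_mul_self_of_posSemidef hP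
  exact ⟨fun b => ∑ p, B b p • h p, gramSum_transpose_mul_self h B⟩

end Duality

section GNS

variable {A I : Type*} [Ring A] [StarRing A] [Algebra ℝ A] [Fintype I]

/-- A truncated Gelfand–Naimark–Segal construction: `c` compresses left multiplication to the span
of `h` with the inner product `⟨a, b⟩ = L (a* b)`, and `ξ p` stands for `h p`, both in coordinates
with respect to an orthonormal basis. -/
theorem exists_compression {h : I → A} {L : A →ₗ[ℝ] ℝ} (hL : ∀ a, L (star a) = L a)
    (hpd : (gram h L).PosDef) :
    ∃ (c : A → Matrix I I ℝ) (ξ : I → I → ℝ), (∀ a, c (star a) = (c a)ᵀ) ∧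
      (∀ p q, ξ p ⬝ᵥ ξ q = L (star (h p) * h q)) ∧ ∀ a p q, a * h p = h q → c a *ᵥ ξ p = ξ q := by
  classical
  obtain ⟨C, hC⟩ := exists_transpose_mul_self_of_posSemidef hpd.posSemidef
  have hC_det : IsUnit C.det := by
    have hunit := (isUnit_iff_isUnit_det _).mp hpd.isUnit
    rw [hC, det_mul] at hunit
    exact isUnit_of_mul_isUnit_right hunit
  let form (a : A) : Matrix I I ℝ := of fun p q => L (star (h p) * (a * h q))
  refine ⟨fun a => C⁻¹ᵀ * form a * C⁻¹, fun p => C.col p, fun a => ?_, fun p q => ?_,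
    fun a p q hapq => ?_⟩
  · have hform : form (star a) = (form a)ᵀ := by
      ext p q
      simp only [form, transpose_apply, of_apply]
      rw [← hL]
      simp only [star_mul, star_star, mul_assoc]
    simp only [hform, transpose_mul, transpose_transpose, Matrix.mul_assoc]
  · rw [← gram_apply, hC]
    rfl
  · have hform : (form a).col p = (Cᵀ * C).col q := by
      ext r
      simp [form, ← hC, hapq, gram_apply]
    calc (C⁻¹ᵀ * form a * C⁻¹) *ᵥ C.col p = C⁻¹ᵀ *ᵥ (form a).col p := by
          rw [← mulVec_single_one, ← mulVec_single_one, mulVec_mulVec, mulVec_mulVec,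
            nonsing_inv_mul_cancel_right _ _ hC_det]
      _ = C.col q := by
          rw [hform, ← mulVec_single_one, ← mulVec_single_one, mulVec_mulVec, ← Matrix.mul_assoc,
            ← transpose_mul, mul_nonsing_inv _ hC_det, transpose_one, Matrix.one_mul]

end GNS

section WordBasis

variable {X : Type*}

/-- The basis of the free algebra consisting of the words in the generators. -/
noncomputable def wordBasis (X : Type*) : Module.Basis (List X) ℝ (FreeAlgebra ℝ X) :=
  (FreeAlgebra.basisFreeMonoid ℝ X).reindex FreeMonoid.toList

lemma wordBasis_apply (w : List X) : wordBasis X w = (w.map (FreeAlgebra.ι ℝ)).prod := by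
  simp [wordBasis, FreeAlgebra.basisFreeMonoid, FreeAlgebra.equivMonoidAlgebraFreeMonoid,
    FreeMonoid.lift_apply]

lemma wordBasis_nil : wordBasis X [] = 1 := by simp [wordBasis_apply]

lemma wordBasis_cons (x : X) (w : List X) :
    wordBasis X (x :: w) = FreeAlgebra.ι ℝ x * wordBasis X w := by simp [wordBasis_apply]

instance : StarModule ℝ (FreeAlgebra ℝ X) where
  star_smul r f := by
    rw [Algebra.smul_def, star_mul, FreeAlgebra.star_algebraMap, star_trivial r, Algebra.smul_def,
      Algebra.commutes]

end WordBasis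

section Fock

variable {α X : Type*}

/-- The inner product on finitely supported functions for which the point masses are
orthonormal. -/
noncomputable def finsuppInner (α : Type*) : LinearMap.BilinForm ℝ (α →₀ ℝ) :=
  Finsupp.linearCombination ℝ Finsupp.lapply

lemma finsuppInner_single (w : α) (a : ℝ) (g : α →₀ ℝ) :
    finsuppInner α (Finsupp.single w a) g = a * g w := by
  simp [finsuppInner]

lemma finsuppInner_comm (f g : α →₀ ℝ) : finsuppInner α f g = finsuppInner α g f := by
  have hflip : finsuppInner α = (finsuppInner α).flip := by
    classical
    ext w u
    simp [finsuppInner_single, Finsupp.single_apply, eq_comm]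
  exact DFunLike.congr_fun (DFunLike.congr_fun hflip f) g

lemma finsuppInner_self_pos {f : α →₀ ℝ} (hf : f ≠ 0) : 0 < finsuppInner α f f := by
  rw [finsuppInner, Finsupp.linearCombination_apply, Finsupp.sum, LinearMap.sum_apply]
  exact Finset.sum_pos (fun w hw => mul_self_pos.mpr (Finsupp.mem_support_iff.mp hw))
    (Finsupp.support_nonempty_iff.mpr hf)

/-- The creation operator of the algebraic full Fock space `List X →₀ ℝ`, prepending the letter
`x`. -/
noncomputable def creation (x : X) : Module.End ℝ (List X →₀ ℝ) :=
  Finsupp.lmapDomain ℝ ℝ (List.cons x)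

/-- The annihilation operator, removing an initial letter `x`. -/
noncomputable def annihilation (x : X) : Module.End ℝ (List X →₀ ℝ) :=
  Finsupp.lcomapDomain (List.cons x) List.cons_injective

lemma finsuppInner_creation (x : X) (f g : List X →₀ ℝ) :
    finsuppInner (List X) (creation x f) g = finsuppInner (List X) f (annihilation x g) := by
  induction f using Finsupp.induction_linear with
  | zero => simp
  | add f₁ f₂ h₁ h₂ => simp only [map_add, LinearMap.add_apply, h₁, h₂]
  | single w a =>
    rw [creation, Finsupp.lmapDomain_apply, Finsupp.mapDomain_single, finsuppInner_single,
      finsuppInner_single]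
    rfl

/-- The position operator of the letter `x`, a symmetric operator on the Fock space. -/
noncomputable def positionOperator (x : X) : Module.End ℝ (List X →₀ ℝ) :=
  creation x + annihilation x

lemma positionOperator_apply (x : X) (f : List X →₀ ℝ) (w : List X) :
    positionOperator x f w = f.mapDomain (List.cons x) w + f (x :: w) := rfl

lemma finsuppInner_positionOperator (x : X) (f g : List X →₀ ℝ) :
    finsuppInner (List X) (positionOperator x f) g =
      finsuppInner (List X) f (positionOperator x g) := by
  simp only [positionOperator, LinearMap.add_apply, map_add]
  rw [finsuppInner_creation, finsuppInner_comm _ g, ← finsuppInner_creation x g,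
    finsuppInner_comm _ f, add_comm]

/-- The Fock representation of the free algebra, by the position operators. -/
noncomputable def fockRep (X : Type*) : FreeAlgebra ℝ X →ₐ[ℝ] Module.End ℝ (List X →₀ ℝ) :=
  FreeAlgebra.lift ℝ positionOperator

lemma finsuppInner_fockRep_star (a : FreeAlgebra ℝ X) (f g : List X →₀ ℝ) :
    finsuppInner (List X) (fockRep X (star a) f) g = finsuppInner (List X) f (fockRep X a g) := by
  induction a using FreeAlgebra.induction generalizing f g with
  | grade0 r => simp [FreeAlgebra.star_algebraMap, Module.algebraMap_end_apply]
  | grade1 x =>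
    rw [FreeAlgebra.star_ι, fockRep, FreeAlgebra.lift_ι_apply, finsuppInner_positionOperator]
  | mul a b ha hb => simp only [star_mul, map_mul, Module.End.mul_apply, ha, hb]
  | add a b ha hb => simp only [star_add, map_add, LinearMap.add_apply, ha, hb]

/-- The vacuum vector of the Fock space, the point mass at the empty word. -/
noncomputable def vacuum (X : Type*) : List X →₀ ℝ := Finsupp.single [] 1

lemma fockRep_wordBasis_vacuum [DecidableEq X] {w u : List X} (hwu : w.length ≤ u.length) :
    fockRep X (wordBasis X w) (vacuum X) u = if u = w then 1 else 0 := by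
  induction w generalizing u with
  | nil => simp [wordBasis_nil, vacuum, Finsupp.single_apply, eq_comm]
  | cons x w ih =>
    obtain _ | ⟨y, u⟩ := u
    · simp at hwu
    rw [List.length_cons, List.length_cons, add_le_add_iff_right] at hwu
    have hlen : w.length ≤ (x :: y :: u).length := hwu.trans (by simp only [List.length_cons]; lia)
    have hlong : (x :: y :: u) ≠ w := by
      rintro rfl
      simp at hwu
    rw [wordBasis_cons, map_mul, Module.End.mul_apply, fockRep, FreeAlgebra.lift_ι_apply, ← fockRep,
      positionOperator_apply, ih hlen, if_neg hlong, add_zero]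
    obtain rfl | hyx := eq_or_ne y x
    · rw [Finsupp.mapDomain_apply List.cons_injective, ih hwu]
      simp
    · rw [Finsupp.mapDomain_of_notMem_range _ _ (by simpa using hyx.symm), if_neg (by simp [hyx])]

lemma fockRep_vacuum_ne_zero {a : FreeAlgebra ℝ X} (ha : a ≠ 0) :
    fockRep X a (vacuum X) ≠ 0 := by
  classical
  obtain ⟨w, hw, hmax⟩ := ((wordBasis X).repr a).support.exists_max_image List.length
    (Finsupp.support_nonempty_iff.mpr (by simpa using ha))
  have hcoeff : fockRep X a (vacuum X) w = (wordBasis X).repr a w := by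
    conv_lhs => rw [← (wordBasis X).linearCombination_repr a, Finsupp.linearCombination_apply,
      Finsupp.sum, map_sum, LinearMap.sum_apply, Finsupp.finsetSum_apply]
    rw [Finset.sum_eq_single_of_mem w hw fun u hu huw => by
      rw [map_smul, LinearMap.smul_apply, Finsupp.smul_apply, fockRep_wordBasis_vacuum (hmax u hu),
        if_neg huw.symm, smul_zero], map_smul, LinearMap.smul_apply, Finsupp.smul_apply,
      fockRep_wordBasis_vacuum le_rfl, if_pos rfl, smul_eq_mul, mul_one]
  intro h0
  rw [h0] at hcoeff
  exact Finsupp.mem_support_iff.mp hw hcoeff.symm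

/-- The vacuum state `a ↦ ⟨Ω, π(a) Ω⟩` of the Fock representation `π` with vacuum vector `Ω`. -/
noncomputable def vacuumState (X : Type*) : FreeAlgebra ℝ X →ₗ[ℝ] ℝ :=
  finsuppInner (List X) (vacuum X) ∘ₗ LinearMap.applyₗ (vacuum X) ∘ₗ
    (fockRep X).toLinearMap

lemma vacuumState_star_mul_self_pos {a : FreeAlgebra ℝ X} (ha : a ≠ 0) :
    0 < vacuumState X (star a * a) := by
  have hnorm : vacuumState X (star a * a) = finsuppInner (List X)
      (fockRep X a (vacuum X)) (fockRep X a (vacuum X)) := by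
    rw [← star_star a, finsuppInner_fockRep_star, star_star]
    simp [vacuumState]
  rw [hnorm]
  exact finsuppInner_self_pos (fockRep_vacuum_ne_zero ha)

lemma vacuumState_trace_star_mul_self_pos {N : Type*} [Fintype N]
    {F : Matrix N N (FreeAlgebra ℝ X)} (hF : F ≠ 0) :
    0 < vacuumState X (star F * F).trace := by
  obtain ⟨i, j, hij⟩ : ∃ i j, F i j ≠ 0 := by
    by_contra! h
    exact hF (Matrix.ext h)
  have hentry (i j : N) : 0 ≤ vacuumState X (star (F i j) * F i j) := by
    obtain h0 | h0 := eq_or_ne (F i j) 0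
    · simp [h0]
    · exact (vacuumState_star_mul_self_pos h0).le
  simp only [trace, diag_apply, mul_apply, star_apply, map_sum]
  exact Finset.sum_pos' (fun _ _ => Finset.sum_nonneg fun _ _ => hentry _ _)
    ⟨j, Finset.mem_univ _, Finset.sum_pos' (fun _ _ => hentry _ _)
      ⟨i, Finset.mem_univ _, vacuumState_star_mul_self_pos hij⟩⟩

end Fock

section Evaluation

variable {X N n : Type*} [Fintype N] [DecidableEq N] [Fintype n] [DecidableEq n]

/-- Entrywise evaluation of a matrix over the free algebra at a tuple of matrices, as a block
matrix. -/
noncomputable def blockEval (Y : X → Matrix n n ℝ) :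
    Matrix N N (FreeAlgebra ℝ X) →ₐ[ℝ] Matrix (N × n) (N × n) ℝ :=
  (compAlgEquiv N n ℝ ℝ).toAlgHom.comp (FreeAlgebra.lift ℝ Y).mapMatrix

lemma blockEval_apply (Y : X → Matrix n n ℝ) (F : Matrix N N (FreeAlgebra ℝ X)) (p q : N × n) :
    blockEval Y F p q = FreeAlgebra.lift ℝ Y (F p.1 q.1) p.2 q.2 := rfl

lemma dotProduct_blockEval_mulVec (Y : X → Matrix n n ℝ) (F : Matrix N N (FreeAlgebra ℝ X))
    (ξ : N → n → ℝ) :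
    (fun p : N × n => ξ p.1 p.2) ⬝ᵥ blockEval Y F *ᵥ (fun p => ξ p.1 p.2) =
      ∑ i, ∑ j, ξ i ⬝ᵥ FreeAlgebra.lift ℝ Y (F i j) *ᵥ ξ j := by
  simp only [dotProduct, mulVec, blockEval_apply, Fintype.sum_prod_type, Finset.mul_sum]
  exact Finset.sum_congr rfl fun i _ => Finset.sum_comm

lemma lift_star {Y : X → Matrix n n ℝ} (hY : ∀ x, (Y x)ᵀ = Y x) (f : FreeAlgebra ℝ X) :
    FreeAlgebra.lift ℝ Y (star f) = (FreeAlgebra.lift ℝ Y f)ᵀ := by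
  induction f using FreeAlgebra.induction with
  | grade0 r =>
    rw [FreeAlgebra.star_algebraMap, AlgHom.commutes, algebraMap_eq_diagonal, diagonal_transpose]
  | grade1 x => rw [FreeAlgebra.star_ι, FreeAlgebra.lift_ι_apply, hY]
  | mul a b ha hb => rw [star_mul, map_mul, ha, hb, map_mul, transpose_mul]
  | add a b ha hb => rw [star_add, map_add, ha, hb, map_add, transpose_add]

lemma blockEval_star {Y : X → Matrix n n ℝ} (hY : ∀ x, (Y x)ᵀ = Y x)
    (F : Matrix N N (FreeAlgebra ℝ X)) : blockEval Y (star F) = star (blockEval Y F) := by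
  ext p q
  simp [blockEval_apply, star_apply, lift_star hY]

lemma posSemidef_blockEval_sum_star_mul_self {ι : Type*} [Fintype ι] {Y : X → Matrix n n ℝ}
    (hY : ∀ x, (Y x)ᵀ = Y x) (G : ι → Matrix N N (FreeAlgebra ℝ X)) :
    (blockEval Y (∑ i, star (G i) * G i)).PosSemidef := by
  simp only [map_sum, map_mul, blockEval_star hY]
  exact posSemidef_sum _ fun i _ => posSemidef_conjTranspose_mul_self _

end Evaluation

section RowWords

variable {X N : Type*}

lemma exists_suffixClosed_superset (T : Finset (List X)) :
    ∃ W : Finset (List X), T ⊆ W ∧ [] ∈ W ∧ ∀ x u, x :: u ∈ W → u ∈ W := by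
  classical
  refine ⟨(insert [] T).biUnion fun w => w.tails.toFinset, fun w hw => ?_, ?_, fun x u hxu => ?_⟩
  · exact Finset.mem_biUnion.mpr ⟨w, Finset.mem_insert_of_mem hw, by simp⟩
  · exact Finset.mem_biUnion.mpr ⟨[], Finset.mem_insert_self _ _, by simp⟩
  · obtain ⟨w, hw, hxuw⟩ := Finset.mem_biUnion.mp hxu
    refine Finset.mem_biUnion.mpr ⟨w, hw, ?_⟩
    rw [List.mem_toFinset, List.mem_tails] at hxuw ⊢
    exact (List.suffix_cons x u).trans hxuw

lemma exists_suffixClosed_entries_mem_span [Finite N] (F : Matrix N N (FreeAlgebra ℝ X)) :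
    ∃ W : Finset (List X), ([] ∈ W ∧ ∀ x u, x :: u ∈ W → u ∈ W) ∧
      ∀ i j, F i j ∈ Submodule.span ℝ (wordBasis X '' W) := by
  classical
  cases nonempty_fintype N
  obtain ⟨W, hTW, hW⟩ := exists_suffixClosed_superset
    (Finset.univ.biUnion fun t : N × N => ((wordBasis X).repr (F t.1 t.2)).support)
  refine ⟨W, hW, fun i j => (wordBasis X).mem_span_image.mpr (Finset.coe_subset.mpr ?_)⟩
  exact (Finset.subset_biUnion_of_mem
    (fun t : N × N => ((wordBasis X).repr (F t.1 t.2)).support) (Finset.mem_univ (i, j))).trans hTW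

variable [DecidableEq N]

/-- The matrix with the word `p.2` in position `(r, p.1)` and zeros elsewhere. One row `r` is
enough: the products of adjoints of such matrices with such matrices reach every position. -/
noncomputable def rowWord (r : N) (W : Finset (List X)) (p : N × W) :
    Matrix N N (FreeAlgebra ℝ X) :=
  single r p.1 (wordBasis X p.2)

lemma linearIndependent_rowWord [Finite N] (r : N) (W : Finset (List X)) :
    LinearIndependent ℝ (rowWord r W) := by
  cases nonempty_fintype N
  have hbasis : rowWord r W =
      (wordBasis X).matrix N N ∘ Prod.mk r ∘ Prod.map id Subtype.val :=
    funext fun p => ((wordBasis X).matrix_apply r p.1 p.2).symm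
  rw [hbasis]
  exact ((wordBasis X).matrix N N).linearIndependent.comp _
    ((Prod.mk_right_injective r).comp (Function.injective_id.prodMap Subtype.val_injective))

variable [Fintype N]

lemma star_rowWord_mul_rowWord (r : N) (W : Finset (List X)) (p q : N × W) :
    star (rowWord r W p) * rowWord r W q =
      single p.1 q.1 (star (wordBasis X p.2) * wordBasis X q.2) := by
  rw [rowWord, rowWord, star_eq_conjTranspose, conjTranspose_single, single_mul_single_same]

lemma scalar_ι_mul_rowWord (r : N) {W : Finset (List X)} {x : X} {u : List X} (hu : u ∈ W)
    (hxu : x :: u ∈ W) (j : N) :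
    scalar N (FreeAlgebra.ι ℝ x) * rowWord r W (j, ⟨u, hu⟩) = rowWord r W (j, ⟨x :: u, hxu⟩) := by
  rw [rowWord, rowWord, wordBasis_cons, scalar_apply, ← smul_eq_diagonal_mul, smul_single,
    smul_eq_mul]

lemma mem_range_gramSum_rowWord {I : Type*} [Fintype I] {W : Finset (List X)} (hnil : [] ∈ W)
    (r : N) (e : I ≃ N × W) {F : Matrix N N (FreeAlgebra ℝ X)}
    (hF : ∀ i j, F i j ∈ Submodule.span ℝ (wordBasis X '' W)) :
    F ∈ LinearMap.range (gramSum (rowWord r W ∘ e)) := by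
  classical
  have hentry (i j : N) {f : FreeAlgebra ℝ X} (hf : f ∈ Submodule.span ℝ (wordBasis X '' W)) :
      single i j f ∈ LinearMap.range (gramSum (rowWord r W ∘ e)) := by
    induction hf using Submodule.span_induction with
    | zero => simp
    | add f g _ _ hf hg => rw [single_add]; exact add_mem hf hg
    | smul a f _ hf => rw [← smul_single]; exact Submodule.smul_mem _ a hf
    | mem f hf =>
      obtain ⟨u, hu, rfl⟩ := hf
      refine ⟨single (e.symm (i, ⟨[], hnil⟩)) (e.symm (j, ⟨u, hu⟩)) 1, ?_⟩
      simp [gramSum_single, star_rowWord_mul_rowWord, wordBasis_nil]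
  rw [matrix_eq_sum_single F]
  exact sum_mem fun i _ => sum_mem fun j _ => hentry i j (hF i j)

end RowWords

section Realization

variable {X N : Type*} [Fintype N] [DecidableEq N]

theorem exists_symmetric_tuple_form_eq {I : Type*} [Fintype I] [DecidableEq I]
    {W : Finset (List X)} (hnil : [] ∈ W) (hcons : ∀ x u, x :: u ∈ W → u ∈ W) (r : N)
    (e : I ≃ N × W) {L : Matrix N N (FreeAlgebra ℝ X) →ₗ[ℝ] ℝ} (hL : ∀ F, L (star F) = L F)
    (hpd : (gram (rowWord r W ∘ e) L).PosDef) :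
    ∃ (Y : X → Matrix I I ℝ) (v : N × I → ℝ), (∀ x, (Y x)ᵀ = Y x) ∧
      ∀ F : Matrix N N (FreeAlgebra ℝ X),
        (∀ i j, F i j ∈ Submodule.span ℝ (wordBasis X '' W)) → v ⬝ᵥ blockEval Y F *ᵥ v = L F := by
  obtain ⟨c, ξ, hc_star, hξ_inner, hc_mul⟩ := exists_compression hL hpd
  let Y (x : X) : Matrix I I ℝ := c (scalar N (FreeAlgebra.ι ℝ x))
  let ζ (j : N) (u : W) : I → ℝ := ξ (e.symm (j, u))
  have hword (j : N) (u : List X) (hu : u ∈ W) :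
      FreeAlgebra.lift ℝ Y (wordBasis X u) *ᵥ ζ j ⟨[], hnil⟩ = ζ j ⟨u, hu⟩ := by
    induction u with
    | nil => simp [wordBasis_nil]
    | cons x u ih =>
      rw [wordBasis_cons, map_mul, FreeAlgebra.lift_ι_apply, ← mulVec_mulVec, ih (hcons x u hu)]
      exact hc_mul _ _ _ (by simpa using scalar_ι_mul_rowWord r (hcons x u hu) hu j)
  have hentry (i j : N) {f : FreeAlgebra ℝ X} (hf : f ∈ Submodule.span ℝ (wordBasis X '' W)) :
      ζ i ⟨[], hnil⟩ ⬝ᵥ FreeAlgebra.lift ℝ Y f *ᵥ ζ j ⟨[], hnil⟩ = L (single i j f) := by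
    induction hf using Submodule.span_induction with
    | zero => simp
    | add f g _ _ hf hg => rw [map_add, add_mulVec, dotProduct_add, hf, hg, single_add, map_add]
    | smul a f _ hf =>
      rw [map_smul, smul_mulVec, dotProduct_smul, hf, ← smul_single, map_smul]
    | mem f hf =>
      obtain ⟨u, hu, rfl⟩ := hf
      rw [hword j u hu, hξ_inner]
      simp [star_rowWord_mul_rowWord, wordBasis_nil]
  refine ⟨Y, fun p => ζ p.1 ⟨[], hnil⟩ p.2, fun x => ?_, fun F hF => ?_⟩
  · have hscalar : star (scalar N (FreeAlgebra.ι ℝ x)) = scalar N (FreeAlgebra.ι ℝ x) := by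
      simp only [scalar_apply, star_eq_conjTranspose, diagonal_conjTranspose, Pi.star_def,
        FreeAlgebra.star_ι]
    rw [← hc_star, hscalar]
  · rw [dotProduct_blockEval_mulVec Y F fun i => ζ i ⟨[], hnil⟩]
    conv_rhs => rw [matrix_eq_sum_single F]
    simp only [map_sum, hentry _ _ (hF _ _)]

theorem exists_eq_sum_star_mul_self_of_blockEval_nonneg {F : Matrix N N (FreeAlgebra ℝ X)}
    (hF : star F = F)
    (hpos : ∀ n, 1 ≤ n → ∀ Y : X → Matrix (Fin n) (Fin n) ℝ, (∀ x, (Y x)ᵀ = Y x) →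
      ∀ v : N × Fin n → ℝ, 0 ≤ v ⬝ᵥ blockEval Y F *ᵥ v) :
    ∃ (m : ℕ) (G : Fin m → Matrix N N (FreeAlgebra ℝ X)), F = ∑ i, star (G i) * G i := by
  obtain hN | ⟨⟨r⟩⟩ := isEmpty_or_nonempty N
  · exact ⟨0, 0, Subsingleton.elim _ _⟩
  obtain ⟨W, ⟨hnil, hcons⟩, hFW⟩ := exists_suffixClosed_entries_mem_span F
  let e := (Fintype.equivFin (N × W)).symm
  refine ⟨_, exists_eq_sum_star_mul_self
    (L₀ := vacuumState X ∘ₗ traceLinearMap N ℝ (FreeAlgebra ℝ X))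
    ((linearIndependent_rowWord r W).comp e e.injective)
    (fun P hP => vacuumState_trace_star_mul_self_pos hP) hF
    (mem_range_gramSum_rowWord hnil r e hFW) fun L hL hpd => ?_⟩
  obtain ⟨Y, v, hY, hv⟩ := exists_symmetric_tuple_form_eq hnil hcons r e hL hpd
  rw [← hv F hFW]
  exact hpos _ (Fintype.card_pos_iff.mpr ⟨(r, ⟨[], hnil⟩)⟩) Y hY v

end Realization

end HermitianSquares

open HermitianSquares in
theorem statement4_general {X N : Type*} [Fintype N] [DecidableEq N]
    {F : Matrix N N (FreeAlgebra ℝ X)} (hF : star F = F) :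
    (∀ n, 1 ≤ n → ∀ Y : X → Matrix (Fin n) (Fin n) ℝ, (∀ x, (Y x)ᵀ = Y x) →
      ∀ v : N × Fin n → ℝ, 0 ≤ v ⬝ᵥ blockEval Y F *ᵥ v) ↔
    ∃ (m : ℕ) (G : Fin m → Matrix N N (FreeAlgebra ℝ X)), F = ∑ i, star (G i) * G i := by
  refine ⟨exists_eq_sum_star_mul_self_of_blockEval_nonneg hF, ?_⟩
  rintro ⟨m, G, rfl⟩ n - Y hY v
  exact (posSemidef_blockEval_sum_star_mul_self hY G).dotProduct_mulVec_nonneg v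

/-- A hermitian matrix `F` over the free algebra `ℝ⟨x₁,…,x_d⟩` is
positive semidefinite at every tuple of symmetric real matrices (of every size `n ≥ 1`,
evaluated entrywise to give a `νn × νn` real block matrix) iff `F = Σ Gᵢ* Gᵢ` for finitely
many matrices `Gᵢ` over the free algebra. -/
theorem statement4 (ν d : ℕ) (hν : 1 ≤ ν) (hd : 1 ≤ d)
    (F : Matrix (Fin ν) (Fin ν) (FreeAlgebra ℝ (Fin d)))
    (hF : star F = F) :
    (∀ (n : ℕ), 1 ≤ n → ∀ X : Fin d → Matrix (Fin n) (Fin n) ℝ,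
        (∀ i, (X i)ᵀ = X i) →
        ∀ v : Fin ν × Fin n → ℝ,
          0 ≤ v ⬝ᵥ (Matrix.of fun p q : Fin ν × Fin n =>
              (FreeAlgebra.lift ℝ X (F p.1 q.1)) p.2 q.2).mulVec v) ↔
    (∃ (m : ℕ) (G : Fin m → Matrix (Fin ν) (Fin ν) (FreeAlgebra ℝ (Fin d))),
        F = ∑ i, star (G i) * G i) :=
  statement4_general hF
end
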